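/- arXiv:1803.05893 — 14 statements merged into one kernel-verified Lean document; each statement's English description precedes it below -/
import Mathlib

section
/- In a uni-monotone polygon P with horizontal top edge at height h, visibility is preserved under vertical projection of the viewer to the top edge: if g, p ∈ P and g sees p (the closed segment [g,p] is contained in P), then the point gH = (g.1, h) lies in P and gH sees p. In particular V(g) ⊆ V(gH). -/
open Set

/-- The lower chain: union of the closed segments `[v i, v (i+1)]`, `i = 0, …, n-2`. -/
def lowerChain (n : ℕ) (hn : 2 ≤ n) (v : Fin n → ℝ × ℝ) : Set (ℝ × ℝ) :=
  ⋃ i : Fin (n - 1), segment ℝ (v (Fin.castLE (by omega) i)) (v (Fin.cast (by omega) i.succ))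

/-- The uni-monotone polygon determined by the lower chain and the top height `h`. -/
def uniPoly (n : ℕ) (hn : 2 ≤ n) (v : Fin n → ℝ × ℝ) (h : ℝ) : Set (ℝ × ℝ) :=
  {p : ℝ × ℝ | (v ⟨0, by omega⟩).1 ≤ p.1 ∧ p.1 ≤ (v ⟨n - 1, by omega⟩).1 ∧ p.2 ≤ h ∧
    ∀ t ∈ lowerChain n hn v, t.1 = p.1 → t.2 ≤ p.2}

/-- The top edge: the closed segment from `v 0` to `v (n-1)`. -/
def topEdge (n : ℕ) (hn : 2 ≤ n) (v : Fin n → ℝ × ℝ) : Set (ℝ × ℝ) :=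
  segment ℝ (v ⟨0, by omega⟩) (v ⟨n - 1, by omega⟩)

/-- `p` sees `q` within `S`: the closed segment `[p,q]` is contained in `S`. -/
def seesIn (S : Set (ℝ × ℝ)) (p q : ℝ × ℝ) : Prop := segment ℝ p q ⊆ S

/-- Visibility polygon of `p` within `S`. -/
def visIn (S : Set (ℝ × ℝ)) (p : ℝ × ℝ) : Set (ℝ × ℝ) := {q | q ∈ S ∧ seesIn S p q}

theorem stmt_0 (n : ℕ) (hn : 2 ≤ n) (v : Fin n → ℝ × ℝ)
    (hmono : ∀ i j : Fin n, i < j → (v i).1 < (v j).1)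
    (h : ℝ) (h0 : (v ⟨0, by omega⟩).2 = h) (hlast : (v ⟨n - 1, by omega⟩).2 = h)
    (hbelow : ∀ i : Fin n, (v i).2 ≤ h)
    (g p : ℝ × ℝ) (hg : g ∈ uniPoly n hn v h) (hp : p ∈ uniPoly n hn v h)
    (hsee : seesIn (uniPoly n hn v h) g p) :
    (g.1, h) ∈ uniPoly n hn v h ∧ seesIn (uniPoly n hn v h) (g.1, h) p ∧
      visIn (uniPoly n hn v h) g ⊆ visIn (uniPoly n hn v h) (g.1, h) := by
  have up : ∀ q ∈ uniPoly n hn v h, ∀ r : ℝ × ℝ, r.1 = q.1 → q.2 ≤ r.2 → r.2 ≤ h →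
      r ∈ uniPoly n hn v h := by
    rintro q ⟨h1, h2, h3, h4⟩ r hr hqr hrh
    refine ⟨by rw [hr]; exact h1, by rw [hr]; exact h2, hrh, fun t ht htr => ?_⟩
    exact (h4 t ht (htr.trans hr)).trans hqr
  have key : ∀ q, seesIn (uniPoly n hn v h) g q → q ∈ uniPoly n hn v h →
      seesIn (uniPoly n hn v h) (g.1, h) q := by
    rintro q hq hqP r ⟨a, b, ha, hb, hab, rfl⟩
    have hgh : g.2 ≤ h := hg.2.2.1
    have hqh : q.2 ≤ h := hqP.2.2.1
    refine up (a • g + b • q) (hq ⟨a, b, ha, hb, hab, rfl⟩) _ ?_ ?_ ?_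
    · simp
    · simp only [Prod.snd_add, Prod.smul_snd, smul_eq_mul]
      nlinarith [mul_le_mul_of_nonneg_left hgh ha]
    · simp only [Prod.snd_add, Prod.smul_snd, smul_eq_mul]
      have : h = a * h + b * h := by rw [← add_mul, hab, one_mul]
      nlinarith [mul_le_mul_of_nonneg_left hqh hb]
  exact ⟨up g hg _ rfl hg.2.2.1 le_rfl, key p hsee hp, fun q hq => ⟨hq.1, key q hq.2 hq.1⟩⟩
end

section
/- For every finite guard cover G of a uni-monotone polygon P (a finite G ⊆ P with P ⊆ ⋃_{g∈G} V(g)), there exists a guard cover G' contained in the top edge H with Set.ncard G' ≤ Set.ncard G. In particular, some minimum-cardinality guard cover of P is contained in H. -/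
open Set

/-- Raising a guard to the top edge does not lose visibility; so any cover can be lifted. -/
theorem lift_cover (n : ℕ) (hn : 2 ≤ n) (v : Fin n → ℝ × ℝ)
    (hmono : ∀ i j : Fin n, i < j → (v i).1 < (v j).1)
    (h : ℝ) (h0 : (v ⟨0, by omega⟩).2 = h) (hlast : (v ⟨n - 1, by omega⟩).2 = h)
    (G : Set (ℝ × ℝ)) (hGfin : G.Finite) (hGP : G ⊆ uniPoly n hn v h)
    (hGcov : uniPoly n hn v h ⊆ ⋃ g ∈ G, visIn (uniPoly n hn v h) g) :
    ∃ G' : Set (ℝ × ℝ), G'.Finite ∧ G' ⊆ topEdge n hn v ∧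
      uniPoly n hn v h ⊆ (⋃ g ∈ G', visIn (uniPoly n hn v h) g) ∧
      G'.ncard ≤ G.ncard := by
  refine ⟨Set.image (fun g : ℝ × ℝ => (g.1, h)) G, hGfin.image _, ?_, ?_, Set.ncard_image_le hGfin⟩
  · rintro _ ⟨g, hg, rfl⟩
    obtain ⟨h1, h2, -, -⟩ := hGP hg
    have hlt := hmono ⟨0, by omega⟩ ⟨n - 1, by omega⟩ (by rw [Fin.mk_lt_mk]; omega)
    have hx : g.1 ∈ segment ℝ (v ⟨0, by omega⟩).1 (v ⟨n - 1, by omega⟩).1 := by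
      rw [segment_eq_Icc hlt.le]
      exact ⟨h1, h2⟩
    obtain ⟨a, b, ha, hb, hab, hx⟩ := hx
    refine ⟨a, b, ha, hb, hab, Prod.ext ?_ ?_⟩
    · simpa using hx
    · simp only [Prod.snd_add, Prod.smul_snd, h0, hlast, smul_eq_mul]
      rw [← add_mul, hab, one_mul]
  · intro q hq
    have hc := hGcov hq
    simp only [Set.mem_iUnion] at hc ⊢
    obtain ⟨g, hg, -, hs⟩ := hc
    refine ⟨(g.1, h), ⟨g, hg, rfl⟩, hq, ?_⟩
    rintro _ ⟨a, b, ha, hb, hab, rfl⟩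
    obtain ⟨k1, k2, k3, k4⟩ := hs ⟨a, b, ha, hb, hab, rfl⟩
    have hgh : g.2 ≤ h := (hGP hg).2.2.1
    have hqh : q.2 ≤ h := hq.2.2.1
    have e1 := mul_le_mul_of_nonneg_left hgh ha
    have e2 := mul_le_mul_of_nonneg_left hqh hb
    have e3 : a * h + b * h = h := by rw [← add_mul, hab, one_mul]
    simp only [Prod.fst_add, Prod.smul_fst, Prod.snd_add, Prod.smul_snd, smul_eq_mul] at k1 k2 k3 k4
    refine ⟨?_, ?_, ?_, ?_⟩
    · simpa using k1
    · simpa using k2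
    · simp only [Prod.snd_add, Prod.smul_snd, smul_eq_mul]
      linarith
    · intro t ht hte
      have := k4 t ht (by simpa using hte)
      simp only [Prod.snd_add, Prod.smul_snd, smul_eq_mul]
      linarith

theorem stmt_1 (n : ℕ) (hn : 2 ≤ n) (v : Fin n → ℝ × ℝ)
    (hmono : ∀ i j : Fin n, i < j → (v i).1 < (v j).1)
    (h : ℝ) (h0 : (v ⟨0, by omega⟩).2 = h) (hlast : (v ⟨n - 1, by omega⟩).2 = h)
    (hbelow : ∀ i : Fin n, (v i).2 ≤ h)
    (G : Set (ℝ × ℝ)) (hGfin : G.Finite) (hGP : G ⊆ uniPoly n hn v h)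
    (hGcov : uniPoly n hn v h ⊆ ⋃ g ∈ G, visIn (uniPoly n hn v h) g) :
    (∃ G' : Set (ℝ × ℝ), G'.Finite ∧ G' ⊆ topEdge n hn v ∧
      uniPoly n hn v h ⊆ (⋃ g ∈ G', visIn (uniPoly n hn v h) g) ∧
      G'.ncard ≤ G.ncard) ∧
    ∃ Gm : Set (ℝ × ℝ), Gm.Finite ∧ Gm ⊆ topEdge n hn v ∧
      uniPoly n hn v h ⊆ (⋃ g ∈ Gm, visIn (uniPoly n hn v h) g) ∧
      ∀ G₂ : Set (ℝ × ℝ), G₂.Finite → G₂ ⊆ uniPoly n hn v h →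
        uniPoly n hn v h ⊆ (⋃ g ∈ G₂, visIn (uniPoly n hn v h) g) →
        Gm.ncard ≤ G₂.ncard := by
  refine ⟨lift_cover n hn v hmono h h0 hlast G hGfin hGP hGcov, ?_⟩
  classical
  let p : ℕ → Prop := fun k => ∃ G₁ : Set (ℝ × ℝ), G₁.Finite ∧ G₁ ⊆ uniPoly n hn v h ∧
    uniPoly n hn v h ⊆ (⋃ g ∈ G₁, visIn (uniPoly n hn v h) g) ∧ G₁.ncard = k
  have hp : ∃ k, p k := ⟨_, G, hGfin, hGP, hGcov, rfl⟩
  obtain ⟨G₁, f1, f2, f3, f4⟩ := Nat.find_spec hp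
  obtain ⟨Gm, m1, m2, m3, m4⟩ := lift_cover n hn v hmono h h0 hlast G₁ f1 f2 f3
  refine ⟨Gm, m1, m2, m3, fun G₂ g1 g2 g3 => ?_⟩
  have := Nat.find_min' hp ⟨G₂, g1, g2, g3, rfl⟩
  omega
end

section
/- In a uni-monotone polygon P, coverage of the lower chain from the top edge implies coverage of P: if G ⊆ H (the top edge) and every point of the lower chain LC is seen by some g ∈ G, then every point of P is seen by some g ∈ G. -/
open Set

/-- Every abscissa between `v 0` and `v k` is attained on the lower chain. -/
theorem exists_chain_point (n : ℕ) (hn : 2 ≤ n) (v : Fin n → ℝ × ℝ)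
    (hmono : ∀ i j : Fin n, i < j → (v i).1 < (v j).1) (x : ℝ)
    (hx0 : (v ⟨0, by omega⟩).1 ≤ x) (k : ℕ) :
    ∀ hk : k < n, x ≤ (v ⟨k, hk⟩).1 → ∃ q ∈ lowerChain n hn v, q.1 = x := by
  induction k with
  | zero =>
    intro hk hx
    refine ⟨v ⟨0, hk⟩, ?_, le_antisymm hx0 hx⟩
    exact Set.mem_iUnion.2 ⟨⟨0, by omega⟩, left_mem_segment ℝ _ _⟩
  | succ k ih =>
    intro hk hx
    by_cases hle : x ≤ (v ⟨k, by omega⟩).1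
    · exact ih (by omega) hle
    · have hlt := hmono ⟨k, by omega⟩ ⟨k + 1, hk⟩ (by simp [Fin.lt_def])
      have hmem : x ∈ segment ℝ (v ⟨k, by omega⟩).1 (v ⟨k + 1, hk⟩).1 := by
        rw [segment_eq_Icc hlt.le]
        exact ⟨(not_le.1 hle).le, hx⟩
      obtain ⟨a, b, ha, hb, hab, he⟩ := hmem
      refine ⟨a • v ⟨k, by omega⟩ + b • v ⟨k + 1, hk⟩, ?_, by simpa using he⟩
      exact Set.mem_iUnion.2 ⟨⟨k, by omega⟩, a, b, ha, hb, hab, rfl⟩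

theorem stmt_2 (n : ℕ) (hn : 2 ≤ n) (v : Fin n → ℝ × ℝ)
    (hmono : ∀ i j : Fin n, i < j → (v i).1 < (v j).1)
    (h : ℝ) (h0 : (v ⟨0, by omega⟩).2 = h) (hlast : (v ⟨n - 1, by omega⟩).2 = h)
    (hbelow : ∀ i : Fin n, (v i).2 ≤ h)
    (G : Set (ℝ × ℝ)) (hGH : G ⊆ topEdge n hn v)
    (hcovLC : ∀ q ∈ lowerChain n hn v, ∃ g ∈ G, seesIn (uniPoly n hn v h) g q) :
    ∀ p ∈ uniPoly n hn v h, ∃ g ∈ G, seesIn (uniPoly n hn v h) g p := by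
  intro p hp
  obtain ⟨hp0, hp1, hph, hpt⟩ := hp
  obtain ⟨q, hq, hqx⟩ := exists_chain_point n hn v hmono p.1 hp0 (n - 1) (by omega) hp1
  have hqp : q.2 ≤ p.2 := hpt q hq hqx
  obtain ⟨g, hg, hs⟩ := hcovLC q hq
  have hgh : g.2 ≤ h := (hs (left_mem_segment ℝ g q)).2.2.1
  refine ⟨g, hg, ?_⟩
  rintro _ ⟨a, b, ha, hb, hab, rfl⟩
  obtain ⟨h1, h2, -, h4⟩ := hs ⟨a, b, ha, hb, hab, rfl⟩
  simp only [Prod.fst_add, Prod.snd_add, Prod.smul_fst, Prod.smul_snd, smul_eq_mul, hqx]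
    at h1 h2 h4
  refine ⟨by simpa using h1, by simpa using h2, ?_, ?_⟩
  · simp only [Prod.snd_add, Prod.smul_snd, smul_eq_mul]
    have e : h = a * h + b * h := by rw [← add_mul, hab, one_mul]
    rw [e]
    gcongr
  · intro t ht htx
    refine (h4 t ht (by simpa using htx)).trans ?_
    simp only [Prod.snd_add, Prod.smul_snd, smul_eq_mul]
    gcongr
end

section
/- In a uni-monotone polygon P, visibility of the vertically projected point on the lower chain implies visibility: if g ∈ H, p ∈ P, and pLC is a point of the lower chain LC with pLC.1 = p.1 (so pLC.2 ≤ p.2), then g sees pLC implies g sees p. -/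
open Set

theorem stmt_3 (n : ℕ) (hn : 2 ≤ n) (v : Fin n → ℝ × ℝ)
    (hmono : ∀ i j : Fin n, i < j → (v i).1 < (v j).1)
    (h : ℝ) (h0 : (v ⟨0, by omega⟩).2 = h) (hlast : (v ⟨n - 1, by omega⟩).2 = h)
    (hbelow : ∀ i : Fin n, (v i).2 ≤ h)
    (g p pLC : ℝ × ℝ) (hg : g ∈ topEdge n hn v) (hp : p ∈ uniPoly n hn v h)
    (hpLC : pLC ∈ lowerChain n hn v) (hx : pLC.1 = p.1)
    (hsee : seesIn (uniPoly n hn v h) g pLC) :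
    seesIn (uniPoly n hn v h) g p := by
  have hgP : g ∈ uniPoly n hn v h := hsee (left_mem_segment ℝ g pLC)
  have hle : pLC.2 ≤ p.2 := hp.2.2.2 pLC hpLC hx
  have hg2 : g.2 ≤ h := hgP.2.2.1
  have hp2 : p.2 ≤ h := hp.2.2.1
  rintro q ⟨a, b, ha, hb, hab, rfl⟩
  obtain ⟨h1, h2, -, h4⟩ := hsee ⟨a, b, ha, hb, hab, rfl⟩
  simp only [Prod.fst_add, Prod.smul_fst, Prod.snd_add, Prod.smul_snd, smul_eq_mul, hx]
    at h1 h2 h4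
  refine ⟨?_, ?_, ?_, ?_⟩
  · simpa using h1
  · simpa using h2
  · simp only [Prod.snd_add, Prod.smul_snd, smul_eq_mul]
    calc a * g.2 + b * p.2 ≤ a * h + b * h := by gcongr
      _ = h := by rw [← add_mul, hab, one_mul]
  · intro t ht htx
    simp only [Prod.fst_add, Prod.smul_fst, smul_eq_mul] at htx
    simp only [Prod.snd_add, Prod.smul_snd, smul_eq_mul]
    calc t.2 ≤ a * g.2 + b * pLC.2 := h4 t ht htx
      _ ≤ a * g.2 + b * p.2 := by gcongr
end

section
/- For a terrain T with altitude line at height h, a guard located anywhere on or above the terrain and at height at most h can be lifted vertically to the altitude line without losing visibility: if g = (gx, gy) is on or above T, (v 0).1 ≤ gx ≤ (v (n-1)).1, gy ≤ h, q ∈ T, and every point of the closed segment [g, q] is on or above T, then every point of the closed segment [(gx, h), q] is on or above T. -/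
open Set

/-- The terrain: union of the closed segments `[v i, v (i+1)]`, `i = 0, …, n-2`. -/
def terrain (n : ℕ) (hn : 2 ≤ n) (v : Fin n → ℝ × ℝ) : Set (ℝ × ℝ) :=
  ⋃ i : Fin (n - 1), segment ℝ (v (Fin.castLE (by omega) i)) (v (Fin.cast (by omega) i.succ))

/-- A point `r` is on or above the terrain `T`. -/
def onAbove (T : Set (ℝ × ℝ)) (r : ℝ × ℝ) : Prop :=
  ∀ t ∈ T, t.1 = r.1 → t.2 ≤ r.2

/-- `p` sees `q` (w.r.t. terrain `T`): every point of the segment `[p,q]` is on or above `T`. -/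
def seesT (T : Set (ℝ × ℝ)) (p q : ℝ × ℝ) : Prop :=
  ∀ x ∈ segment ℝ p q, onAbove T x

/-- The altitude line at height `h`: the segment from `((v 0).1, h)` to `((v (n-1)).1, h)`. -/
def altLine (n : ℕ) (hn : 2 ≤ n) (v : Fin n → ℝ × ℝ) (h : ℝ) : Set (ℝ × ℝ) :=
  segment ℝ ((v ⟨0, by omega⟩).1, h) ((v ⟨n - 1, by omega⟩).1, h)

theorem stmt_4 (n : ℕ) (hn : 2 ≤ n) (v : Fin n → ℝ × ℝ)
    (hmono : ∀ i j : Fin n, i < j → (v i).1 < (v j).1)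
    (h : ℝ) (hh : ∀ i : Fin n, (v i).2 < h)
    (gx gy : ℝ) (hg : onAbove (terrain n hn v) (gx, gy))
    (hgx1 : (v ⟨0, by omega⟩).1 ≤ gx) (hgx2 : gx ≤ (v ⟨n - 1, by omega⟩).1)
    (hgy : gy ≤ h)
    (q : ℝ × ℝ) (hq : q ∈ terrain n hn v)
    (hsee : seesT (terrain n hn v) (gx, gy) q) :
    seesT (terrain n hn v) (gx, h) q := by
  rintro x ⟨a, b, ha, hb, hab, rfl⟩ t ht htx
  have key := hsee (a • (gx, gy) + b • q) ⟨a, b, ha, hb, hab, rfl⟩ t ht (by simpa using htx)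
  have h2 := mul_le_mul_of_nonneg_left hgy ha
  simp only [Prod.snd_add, Prod.smul_snd, smul_eq_mul] at key ⊢
  linarith
end

section
/- (No-help lemma) For a terrain T with altitude line A at height h: let g, g' ∈ A and p ∈ T with g'.1 < g.1 < p.1. If g' sees p, then g sees p. Equivalently, if g does not see a point p of the terrain to its right, then no point of A to the left of g sees p. -/
open Set

theorem stmt_5 (n : ℕ) (hn : 2 ≤ n) (v : Fin n → ℝ × ℝ)
    (hmono : ∀ i j : Fin n, i < j → (v i).1 < (v j).1)
    (h : ℝ) (hh : ∀ i : Fin n, (v i).2 < h)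
    (g g' : ℝ × ℝ) (hg : g ∈ altLine n hn v h) (hg' : g' ∈ altLine n hn v h)
    (p : ℝ × ℝ) (hp : p ∈ terrain n hn v)
    (hlt1 : g'.1 < g.1) (hlt2 : g.1 < p.1)
    (hsee : seesT (terrain n hn v) g' p) :
    seesT (terrain n hn v) g p := by
  have hg2 : g.2 = h := by
    obtain ⟨a, b, _, _, hab, rfl⟩ := hg
    simp only [Prod.snd_add, Prod.smul_snd, smul_eq_mul]
    rw [← add_mul, hab, one_mul]
  have hg'2 : g'.2 = h := by
    obtain ⟨a, b, _, _, hab, rfl⟩ := hg'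
    simp only [Prod.snd_add, Prod.smul_snd, smul_eq_mul]
    rw [← add_mul, hab, one_mul]
  have hp2 : p.2 ≤ h := by
    obtain ⟨i, a, b, ha, hb, hab, rfl⟩ := mem_iUnion.1 hp
    simp only [Prod.snd_add, Prod.smul_snd, smul_eq_mul]
    have h1 := mul_le_mul_of_nonneg_left (hh (Fin.castLE (by omega) i)).le ha
    have h2 := mul_le_mul_of_nonneg_left (hh (Fin.cast (by omega) i.succ)).le hb
    have h3 : a * h + b * h = h := by rw [← add_mul, hab, one_mul]
    linarith
  rintro x ⟨a, b, ha, hb, hab, rfl⟩ t ht htx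
  have hd : 0 < p.1 - g'.1 := by linarith
  have hc : 0 ≤ a * ((g.1 - g'.1) / (p.1 - g'.1)) :=
    mul_nonneg ha (div_nonneg (by linarith) hd.le)
  have ha' : 0 ≤ a * ((p.1 - g.1) / (p.1 - g'.1)) :=
    mul_nonneg ha (div_nonneg (by linarith) hd.le)
  have hsum : a * ((p.1 - g.1) / (p.1 - g'.1)) + a * ((g.1 - g'.1) / (p.1 - g'.1)) = a := by
    field_simp
    ring
  have key := hsee (((a * ((p.1 - g.1) / (p.1 - g'.1))) • g' +
      (b + a * ((g.1 - g'.1) / (p.1 - g'.1))) • p))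
    ⟨_, _, ha', by linarith, by linarith, rfl⟩ t ht (by
      rw [htx]
      simp only [Prod.fst_add, Prod.smul_fst, smul_eq_mul]
      field_simp
      ring)
  simp only [Prod.snd_add, Prod.smul_snd, smul_eq_mul, hg2, hg'2] at key ⊢
  generalize a * ((g.1 - g'.1) / (p.1 - g'.1)) = c at *
  generalize a * ((p.1 - g.1) / (p.1 - g'.1)) = d at *
  subst hsum
  nlinarith [mul_le_mul_of_nonneg_left hp2 hc]
end

section
/- For a terrain T with altitude line A at height h and any fixed point q ∈ T, the set of altitude positions that see q, namely {p ∈ A : p sees q}, is a convex subset of ℝ × ℝ (an interval of A). -/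
open Set

/-- Visibility of `q` from `(X, h)` is inherited by positions between `X` and `q.1`. -/
lemma sees_of_scale (T : Set (ℝ × ℝ)) (q : ℝ × ℝ) (h X x0 c : ℝ) (hqh : q.2 ≤ h)
    (hs : seesT T (X, h) q) (hc0 : 0 ≤ c) (hc1 : c ≤ 1) (hx : x0 - q.1 = c * (X - q.1)) :
    seesT T (x0, h) q := by
  rintro x ⟨s, t, hs0, ht0, hst, rfl⟩ τ hτ hτx
  have ht : t = 1 - s := by linarith
  subst ht
  have key := hs ((s * c) • (X, h) + (1 - s * c) • q)
    ⟨s * c, 1 - s * c, by positivity, by nlinarith, by ring, rfl⟩ τ hτ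
  simp only [Prod.fst_add, Prod.snd_add, Prod.smul_fst, Prod.smul_snd, smul_eq_mul] at key hτx ⊢
  have h1 := key (by rw [hτx]; linear_combination s * hx)
  nlinarith [mul_nonneg (mul_nonneg hs0 (sub_nonneg.2 hc1)) (sub_nonneg.2 hqh)]

lemma exists_scale (d1 d2 a b : ℝ) (ha : 0 ≤ a) (hb : 0 ≤ b) (hab : a + b = 1) :
    ∃ c, 0 ≤ c ∧ c ≤ 1 ∧ (a * d1 + b * d2 = c * d1 ∨ a * d1 + b * d2 = c * d2) := by
  have main : ∀ d e : ℝ, 0 ≤ d → e ≤ d → 0 ≤ e → ∃ c, 0 ≤ c ∧ c ≤ 1 ∧ e = c * d := by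
    intro d e hd hed he
    rcases hd.eq_or_lt with h0 | h0
    · exact ⟨0, le_rfl, zero_le_one, by linarith⟩
    · exact ⟨e / d, by positivity, (div_le_one h0).2 hed, by field_simp⟩
  have hb' : b = 1 - a := by linarith
  subst hb'
  have main2 : ∀ d e : ℝ, (0 ≤ e ∧ e ≤ d) ∨ (e ≤ 0 ∧ d ≤ e) →
      ∃ c, 0 ≤ c ∧ c ≤ 1 ∧ e = c * d := by
    rintro d e (⟨h1, h2⟩ | ⟨h1, h2⟩)
    · exact main d e (by linarith) h2 h1
    · obtain ⟨c, hc0, hc1, hc⟩ := main (-d) (-e) (by linarith) (by linarith) (by linarith)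
      exact ⟨c, hc0, hc1, by linarith⟩
  rcases le_total d1 d2 with h | h <;>
    have h3 := mul_nonneg ha (sub_nonneg.2 h) <;>
    have h4 := mul_nonneg hb (sub_nonneg.2 h) <;>
    rcases le_total 0 (a * d1 + (1 - a) * d2) with h' | h'
  · obtain ⟨c, h0, h1, h2⟩ := main2 d2 _ (Or.inl ⟨h', by linarith⟩)
    exact ⟨c, h0, h1, Or.inr h2⟩
  · obtain ⟨c, h0, h1, h2⟩ := main2 d1 _ (Or.inr ⟨h', by linarith⟩)
    exact ⟨c, h0, h1, Or.inl h2⟩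
  · obtain ⟨c, h0, h1, h2⟩ := main2 d1 _ (Or.inl ⟨h', by linarith⟩)
    exact ⟨c, h0, h1, Or.inl h2⟩
  · obtain ⟨c, h0, h1, h2⟩ := main2 d2 _ (Or.inr ⟨h', by linarith⟩)
    exact ⟨c, h0, h1, Or.inr h2⟩

theorem stmt_6 (n : ℕ) (hn : 2 ≤ n) (v : Fin n → ℝ × ℝ)
    (hmono : ∀ i j : Fin n, i < j → (v i).1 < (v j).1)
    (h : ℝ) (hh : ∀ i : Fin n, (v i).2 < h)
    (q : ℝ × ℝ) (hq : q ∈ terrain n hn v) :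
    Convex ℝ {p ∈ altLine n hn v h | seesT (terrain n hn v) p q} := by
  have hqh : q.2 ≤ h := by
    obtain ⟨i, s, t, hs, ht, hst, rfl⟩ := mem_iUnion.1 hq
    simp only [Prod.snd_add, Prod.smul_snd, smul_eq_mul]
    have h1 := mul_le_mul_of_nonneg_left (hh (Fin.castLE (by omega) i)).le hs
    have h2 := mul_le_mul_of_nonneg_left (hh (Fin.cast (by omega) i.succ)).le ht
    have h3 : s * h + t * h = h := by rw [← add_mul, hst, one_mul]
    linarith
  have halt : ∀ p ∈ altLine n hn v h, p.2 = h := by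
    rintro p ⟨s, t, hs, ht, hst, rfl⟩
    simp only [Prod.snd_add, Prod.smul_snd, smul_eq_mul]
    rw [← add_mul, hst, one_mul]
  rintro ⟨x1, y1⟩ ⟨hA1, hs1⟩ ⟨x2, y2⟩ ⟨hA2, hs2⟩ a b ha hb hab
  refine ⟨convex_segment _ _ hA1 hA2 ha hb hab, ?_⟩
  obtain rfl : y1 = h := halt _ hA1
  obtain rfl : y2 = y1 := halt _ hA2
  have e : a • (x1, y2) + b • (x2, y2) = (a * x1 + b * x2, y2) := by
    ext
    · simp
    · simp [← add_mul, hab]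
  rw [e]
  obtain ⟨c, hc0, hc1, hc | hc⟩ := exists_scale (x1 - q.1) (x2 - q.1) a b ha hb hab
  · exact sees_of_scale _ q _ x1 _ c hqh hs1 hc0 hc1 (by linear_combination hc + q.1 * hab)
  · exact sees_of_scale _ q _ x2 _ c hqh hs2 hc0 hc1 (by linear_combination hc + q.1 * hab)
end

section
/- For a terrain T with altitude line A at height h and any subset S ⊆ T, the strong visibility region of S on the altitude line, namely {p ∈ A : ∀ q ∈ S, p sees q}, is a convex subset of ℝ × ℝ. In particular, for each terrain edge e the set of points of A seeing all of e is an interval, whose left and right endpoints are the opening point and the closing point of e. -/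
open Set

theorem sees_aux (T : Set (ℝ × ℝ)) (q : ℝ × ℝ) (a c h : ℝ) (hq : q.2 ≤ h)
    (hac : (a ≤ c ∧ c ≤ q.1) ∨ (c ≤ a ∧ q.1 ≤ c)) (hs : seesT T (a, h) q) :
    seesT T (c, h) q := by
  rintro x ⟨s, r, hs0, hr0, hsr, rfl⟩ t ht htx
  simp only [Prod.fst_add, Prod.snd_add, Prod.smul_fst, Prod.smul_snd, smul_eq_mul] at htx ⊢
  obtain ⟨s', h0, h1, he⟩ : ∃ s', 0 ≤ s' ∧ s' ≤ s ∧ s' * (a - q.1) = s * (c - q.1) := by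
    by_cases haq : a - q.1 = 0
    · exact ⟨0, le_rfl, hs0, by
        have : c - q.1 = 0 := by rcases hac with h | h <;> linarith
        rw [this]; ring⟩
    · have hk : 0 ≤ (c - q.1) / (a - q.1) ∧ (c - q.1) / (a - q.1) ≤ 1 := by
        rcases hac with ⟨h1, h2⟩ | ⟨h1, h2⟩
        · exact ⟨div_nonneg_of_nonpos (by linarith) (by linarith),
            div_le_one_of_ge (by linarith) (by linarith)⟩
        · exact ⟨div_nonneg (by linarith) (by linarith),
            div_le_one_of_le₀ (by linarith) (by linarith)⟩
      refine ⟨s * ((c - q.1) / (a - q.1)), mul_nonneg hs0 hk.1,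
        mul_le_of_le_one_right hs0 hk.2, ?_⟩
      field_simp
  have key := hs (s' • ((a, h) : ℝ × ℝ) + (1 - s') • q)
    ⟨s', 1 - s', h0, by linarith, by ring, rfl⟩ t ht
  simp only [Prod.fst_add, Prod.snd_add, Prod.smul_fst, Prod.smul_snd, smul_eq_mul] at key
  have hr : r = 1 - s := by linarith
  subst hr
  have := key (by linarith)
  nlinarith [mul_nonneg (sub_nonneg.2 h1) (sub_nonneg.2 hq)]

theorem stmt_7 (n : ℕ) (hn : 2 ≤ n) (v : Fin n → ℝ × ℝ)
    (hmono : ∀ i j : Fin n, i < j → (v i).1 < (v j).1)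
    (h : ℝ) (hh : ∀ i : Fin n, (v i).2 < h)
    (S : Set (ℝ × ℝ)) (hS : S ⊆ terrain n hn v) :
    Convex ℝ {p ∈ altLine n hn v h | ∀ q ∈ S, seesT (terrain n hn v) p q} := by
  have hA : ∀ p ∈ altLine n hn v h, p.2 = h := by
    rintro p ⟨s, r, _, _, hsr, rfl⟩
    simp only [Prod.snd_add, Prod.smul_snd, smul_eq_mul]
    rw [← add_mul, hsr, one_mul]
  have hT : ∀ q ∈ terrain n hn v, q.2 ≤ h := by
    intro q hq
    obtain ⟨i, s, r, hs, hr, hsr, rfl⟩ := mem_iUnion.1 hq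
    simp only [Prod.snd_add, Prod.smul_snd, smul_eq_mul]
    have h1 := mul_le_mul_of_nonneg_left (hh (Fin.castLE (by omega) i)).le hs
    have h2 := mul_le_mul_of_nonneg_left (hh (Fin.cast (by omega) i.succ)).le hr
    have h3 : s * h + r * h = h := by rw [← add_mul, hsr, one_mul]
    linarith
  rintro ⟨a, y⟩ ⟨haA, ha⟩ ⟨b, z⟩ ⟨hbA, hb⟩ s r hs hr hsr
  have hy : y = h := hA _ haA
  have hz : z = h := hA _ hbA
  subst hy
  subst hz
  refine ⟨convex_segment _ _ haA hbA hs hr hsr, fun q hq => ?_⟩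
  have hqh := hT q (hS hq)
  have hp : s • ((a, z) : ℝ × ℝ) + r • ((b, z) : ℝ × ℝ) = (s * a + r * b, z) := by
    ext
    · simp
    · simp [← add_mul, hsr]
  rw [hp]
  have hr' : r = 1 - s := by linarith
  subst hr'
  rcases le_total (s * a + (1 - s) * b) q.1 with hc | hc <;> rcases le_total a b with hab | hab
  · exact sees_aux _ q a _ z hqh (Or.inl ⟨by nlinarith, hc⟩) (ha q hq)
  · exact sees_aux _ q b _ z hqh (Or.inl ⟨by nlinarith, hc⟩) (hb q hq)
  · exact sees_aux _ q b _ z hqh (Or.inr ⟨by nlinarith, hc⟩) (hb q hq)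
  · exact sees_aux _ q a _ z hqh (Or.inr ⟨by nlinarith, hc⟩) (ha q hq)
end

section
/- (Empty-triangle lemma) Let T be a terrain and h a height above it. Let c = (c1, h) and q = (q1, h) with c1 ≤ q1, and let w ∈ ℝ × ℝ with c1 ≤ w.1 ≤ q1 and w.2 ≤ h. If every point of the closed segment [c, w] is on or above T and every point of the closed segment [w, q] is on or above T, then every point of the convex hull of {c, q, w} is on or above T. -/
open Set

lemma exists_ratio (a L D : ℝ) (ha : 0 ≤ a) (hL : 0 ≤ L) (hD : 0 ≤ D) (hDa : D ≤ a * L) :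
    ∃ s, 0 ≤ s ∧ s ≤ a ∧ s * L = D := by
  rcases hL.eq_or_lt with h0 | h0
  · subst h0
    exact ⟨0, le_rfl, ha, by linarith⟩
  · exact ⟨D / L, by positivity, by rwa [div_le_iff₀ h0], by field_simp⟩

theorem stmt_8 (n : ℕ) (hn : 2 ≤ n) (v : Fin n → ℝ × ℝ)
    (hmono : ∀ i j : Fin n, i < j → (v i).1 < (v j).1)
    (h : ℝ) (hh : ∀ i : Fin n, (v i).2 < h)
    (c1 q1 : ℝ) (hcq : c1 ≤ q1)
    (w : ℝ × ℝ) (hw1 : c1 ≤ w.1) (hw2 : w.1 ≤ q1) (hwh : w.2 ≤ h)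
    (hcw : ∀ x ∈ segment ℝ (c1, h) w, onAbove (terrain n hn v) x)
    (hwq : ∀ x ∈ segment ℝ w (q1, h), onAbove (terrain n hn v) x) :
    ∀ x ∈ convexHull ℝ ({(c1, h), (q1, h), w} : Set (ℝ × ℝ)),
      onAbove (terrain n hn v) x := by
  intro x hx
  rw [convexHull_insert (by simp), convexHull_pair, mem_convexJoin] at hx
  obtain ⟨c, hc, y, hy, hx⟩ := hx
  rw [mem_singleton_iff] at hc
  subst hc
  obtain ⟨b', d', hb', hd', hbd', rfl⟩ := hy
  obtain ⟨a, e, ha, he, hae, rfl⟩ := hx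
  obtain ⟨w1, w2⟩ := w
  simp only at hw1 hw2 hwh
  obtain ⟨b, hb⟩ : ∃ b, b = e * b' := ⟨_, rfl⟩
  obtain ⟨d, hd⟩ : ∃ d, d = e * d' := ⟨_, rfl⟩
  have hb0 : 0 ≤ b := by rw [hb]; positivity
  have hd0 : 0 ≤ d := by rw [hd]; positivity
  have hs : d = 1 - a - b := by
    rw [hd, hb]; linear_combination hae + e * hbd'
  have hx1 : a * c1 + e * (b' * q1 + d' * w1) = a * c1 + b * q1 + d * w1 := by
    rw [hd, hb]; ring
  have hx2 : a * h + e * (b' * h + d' * w2) = a * h + b * h + d * w2 := by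
    rw [hd, hb]; ring
  intro t ht htx
  simp only [Prod.smul_mk, Prod.mk_add_mk, smul_eq_mul] at htx ⊢
  rw [hx1] at htx
  rw [hx2]
  clear hx1 hx2 hd hb
  subst hs
  have hbq : 0 ≤ b * (q1 - w1) := mul_nonneg hb0 (by linarith)
  have hac : 0 ≤ a * (w1 - c1) := mul_nonneg ha (by linarith)
  rcases le_total t.1 w1 with hle | hle
  · obtain ⟨s, hs0, hsa, hsL⟩ := exists_ratio a (w1 - c1) (w1 - t.1) ha (by linarith)
      (by linarith) (by rw [htx]; linarith)
    have := hcw (s * c1 + (1 - s) * w1, s * h + (1 - s) * w2)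
      ⟨s, 1 - s, hs0, by linarith, by ring, by simp⟩ t ht (by simp only; linarith)
    simp only at this
    nlinarith [mul_nonneg (show 0 ≤ a + b - s by linarith) (sub_nonneg.2 hwh)]
  · obtain ⟨s, hs0, hsa, hsL⟩ := exists_ratio b (q1 - w1) (t.1 - w1) hb0 (by linarith)
      (by linarith) (by rw [htx]; linarith)
    have := hwq ((1 - s) * w1 + s * q1, (1 - s) * w2 + s * h)
      ⟨1 - s, s, by linarith, hs0, by ring, by simp⟩ t ht (by simp only; linarith)
    simp only at this
    nlinarith [mul_nonneg (show 0 ≤ a + b - s by linarith) (sub_nonneg.2 hwh)]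
end

section
/- (Convex-vertex edge lemma) Let T be a terrain with altitude line A at height h, and let j be an index with j + 1 ≤ n - 1. Let g = (gx, h) ∈ A with gx ≤ (v j).1, suppose g sees the vertex v j, and suppose v (j+1) lies on or above the ray from g through v j, i.e. ((v j).1 - gx) * ((v (j+1)).2 - (v j).2) - ((v j).2 - h) * ((v (j+1)).1 - (v j).1) ≥ 0. Then g sees every point of the closed segment [v j, v (j+1)]. -/
open Set

theorem mono_le_aux {n : ℕ} (v : Fin n → ℝ × ℝ)
    (hmono : ∀ i j : Fin n, i < j → (v i).1 < (v j).1) (i j : Fin n) (hij : i ≤ j) :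
    (v i).1 ≤ (v j).1 := by
  rcases hij.lt_or_eq with h | h
  · exact (hmono i j h).le
  · rw [h]

theorem stmt_9 (n : ℕ) (hn : 2 ≤ n) (v : Fin n → ℝ × ℝ)
    (hmono : ∀ i j : Fin n, i < j → (v i).1 < (v j).1)
    (h : ℝ) (hh : ∀ i : Fin n, (v i).2 < h)
    (j : ℕ) (hj : j + 1 ≤ n - 1)
    (gx : ℝ) (hgA : (gx, h) ∈ altLine n hn v h)
    (hgx : gx ≤ (v ⟨j, by omega⟩).1)
    (hseesVj : seesT (terrain n hn v) (gx, h) (v ⟨j, by omega⟩))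
    (habove : ((v ⟨j, by omega⟩).1 - gx) * ((v ⟨j + 1, by omega⟩).2 - (v ⟨j, by omega⟩).2) -
      ((v ⟨j, by omega⟩).2 - h) * ((v ⟨j + 1, by omega⟩).1 - (v ⟨j, by omega⟩).1) ≥ 0) :
    ∀ x ∈ segment ℝ (v ⟨j, by omega⟩) (v ⟨j + 1, by omega⟩),
      seesT (terrain n hn v) (gx, h) x := by
  intro x hx p hp t ht htp
  have hab := hmono ⟨j, by omega⟩ ⟨j + 1, by omega⟩ (by simp [Fin.lt_def])
  have hha := hh ⟨j, by omega⟩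
  have hedge : ∀ t ∈ terrain n hn v, (v ⟨j, by omega⟩).1 < t.1 → t.1 ≤ (v ⟨j + 1, by omega⟩).1 →
      (t.2 - (v ⟨j, by omega⟩).2) * ((v ⟨j + 1, by omega⟩).1 - (v ⟨j, by omega⟩).1)
        = (t.1 - (v ⟨j, by omega⟩).1) * ((v ⟨j + 1, by omega⟩).2 - (v ⟨j, by omega⟩).2) := by
    intro t ht h1 h2
    simp only [terrain, mem_iUnion] at ht
    obtain ⟨⟨i, hi⟩, α, β, hα, hβ, hαβ, rfl⟩ := ht
    have e1 : (Fin.castLE (by omega) (⟨i, hi⟩ : Fin (n - 1)) : Fin n) = ⟨i, by omega⟩ := rfl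
    have e2 : (Fin.cast (by omega) (⟨i, hi⟩ : Fin (n - 1)).succ : Fin n) = ⟨i + 1, by omega⟩ := rfl
    rw [e1, e2] at h1 h2 ⊢
    have hii := hmono ⟨i, by omega⟩ ⟨i + 1, by omega⟩ (by simp [Fin.lt_def])
    simp only [Prod.fst_add, Prod.snd_add, Prod.smul_fst, Prod.smul_snd, smul_eq_mul] at h1 h2 ⊢
    obtain rfl : α = 1 - β := by linarith
    rcases lt_trichotomy i j with hij | hij | hij
    · exfalso
      have := mono_le_aux v hmono ⟨i + 1, by omega⟩ ⟨j, by omega⟩ (by simp [Fin.le_def]; omega)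
      nlinarith
    · subst hij
      ring
    · have h3 := mono_le_aux v hmono ⟨j + 1, by omega⟩ ⟨i, by omega⟩ (by simp [Fin.le_def]; omega)
      have hb : β = 0 := by
        by_contra hne
        have : 0 < β := lt_of_le_of_ne hβ (Ne.symm hne)
        nlinarith
      subst hb
      have hij' : i = j + 1 := by
        by_contra hne
        have := hmono ⟨j + 1, by omega⟩ ⟨i, by omega⟩ (by simp [Fin.lt_def]; omega)
        linarith
      subst hij'
      ring
  have hT := hedge t ht
  clear hedge
  generalize v ⟨j, by omega⟩ = a at *
  generalize v ⟨j + 1, by omega⟩ = b at *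
  clear hgA hh hmono
  obtain ⟨α, s, hα, hs, hαs, rfl⟩ := hx
  obtain ⟨γ, u, hγ, hu, hγu, rfl⟩ := hp
  obtain rfl : α = 1 - s := by linarith
  obtain rfl : γ = 1 - u := by linarith
  obtain ⟨a1, a2⟩ := a
  obtain ⟨b1, b2⟩ := b
  obtain ⟨t1, t2⟩ := t
  have hsees : ∀ w : ℝ, 0 ≤ w → w ≤ 1 → t1 = (1 - w) * gx + w * a1 →
      t2 ≤ (1 - w) * h + w * a2 := by
    intro w hw0 hw1 hw
    have := hseesVj ((1 - w) • (gx, h) + w • (a1, a2))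
      ⟨1 - w, w, by linarith, hw0, by ring, rfl⟩ (t1, t2) ht (by simpa using hw)
    simpa using this
  simp only [Prod.fst_add, Prod.snd_add, Prod.smul_fst, Prod.smul_snd, smul_eq_mul] at *
  have hs1 : 0 ≤ 1 - s := hα
  have hus : 0 ≤ u * s := mul_nonneg hu hs
  rcases le_or_gt t1 a1 with hta | hta
  · rcases hgx.lt_or_eq with hg | hg
    · have hd : 0 < a1 - gx := by linarith
      have ht1 : t1 - gx = u * (a1 - gx) + u * s * (b1 - a1) := by rw [htp]; ring
      have hnn : 0 ≤ t1 - gx := by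
        rw [ht1]
        exact add_nonneg (mul_nonneg hu hd.le) (mul_nonneg hus (by linarith))
      have := hsees ((t1 - gx) / (a1 - gx))
        (div_nonneg hnn hd.le)
        (by rw [div_le_one hd]; linarith) (by field_simp; ring)
      refine this.trans ?_
      have e : (1 - (t1 - gx) / (a1 - gx)) * h + (t1 - gx) / (a1 - gx) * a2
          = h + (t1 - gx) * (a2 - h) / (a1 - gx) := by field_simp; ring
      rw [e, ← le_sub_iff_add_le', div_le_iff₀ hd, ht1]
      have := mul_nonneg hus habove
      linarith
    · subst hg
      have h0 : u * s * (b1 - gx) ≤ 0 := by linarith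
      have h0' : u * s = 0 := by
        apply le_antisymm _ hus
        by_contra hc
        push Not at hc
        have := mul_pos hc (sub_pos.2 hab)
        linarith
      have := hsees u hu (by linarith) (by linear_combination htp + (b1 - gx) * h0')
      linear_combination this - (b2 - a2) * h0'
  · have htb : t1 ≤ b1 := by
      have hu1 : u * s ≤ 1 := by nlinarith
      nlinarith [mul_nonneg hγ (sub_nonneg.2 hgx), mul_nonneg (sub_nonneg.2 hu1) (sub_nonneg.2 hab.le)]
    have hT' := hT hta htb
    have hd : 0 < b1 - a1 := by linarith
    have := mul_nonneg hγ habove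
    refine le_of_mul_le_mul_right ?_ hd
    rw [htp] at hT'
    linarith
end

section
/- (Optimal altitude guarding) For every terrain T with altitude line A at height h, there exist a finite guard cover G ⊆ A (every point of T is seen by some g ∈ G) and a finite witness set W ⊆ T (the sets V_A(w) for w ∈ W are pairwise disjoint) with Set.ncard G = Set.ncard W. Consequently, every guard cover G' ⊆ A satisfies Set.ncard G ≤ Set.ncard G', i.e. G is a minimum-cardinality guard cover. -/
open Set

/-- Visibility region on the terrain of a point `g` of the altitude line. -/
def visT (n : ℕ) (hn : 2 ≤ n) (v : Fin n → ℝ × ℝ) (g : ℝ × ℝ) : Set (ℝ × ℝ) :=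
  {q | q ∈ terrain n hn v ∧ seesT (terrain n hn v) g q}

/-- Visibility region on the altitude line of a point `w` of the terrain. -/
def visA (n : ℕ) (hn : 2 ≤ n) (v : Fin n → ℝ × ℝ) (h : ℝ) (w : ℝ × ℝ) : Set (ℝ × ℝ) :=
  {p | p ∈ altLine n hn v h ∧ seesT (terrain n hn v) w p}


lemma mem_terrain_iff (n : ℕ) (hn : 2 ≤ n) (v : Fin n → ℝ × ℝ) (t : ℝ × ℝ) :
    t ∈ terrain n hn v ↔ ∃ (i : ℕ) (hi : i + 1 < n) (s : ℝ), 0 ≤ s ∧ s ≤ 1 ∧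
      t.1 = (v ⟨i, by omega⟩).1 + s * ((v ⟨i+1, hi⟩).1 - (v ⟨i, by omega⟩).1) ∧
      t.2 = (v ⟨i, by omega⟩).2 + s * ((v ⟨i+1, hi⟩).2 - (v ⟨i, by omega⟩).2) := by
  unfold terrain
  simp only [mem_iUnion, segment_eq_image', mem_image, mem_Icc]
  constructor
  · rintro ⟨i, s, ⟨h0, h1⟩, rfl⟩
    exact ⟨i.1, by omega, s, h0, h1, rfl, rfl⟩
  · rintro ⟨i, hi, s, h0, h1, e1, e2⟩
    exact ⟨⟨i, by omega⟩, s, ⟨h0, h1⟩, Prod.ext e1.symm e2.symm⟩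

lemma terrain_graph_aux (n : ℕ) (v : Fin n → ℝ × ℝ)
    (hmono : ∀ i j : Fin n, i < j → (v i).1 < (v j).1) (t t' : ℝ × ℝ)
    (i : ℕ) (hi : i + 1 < n) (s : ℝ) (_hs0 : 0 ≤ s) (hs1 : s ≤ 1)
    (e1 : t.1 = (v ⟨i, by omega⟩).1 + s * ((v ⟨i+1, hi⟩).1 - (v ⟨i, by omega⟩).1))
    (e2 : t.2 = (v ⟨i, by omega⟩).2 + s * ((v ⟨i+1, hi⟩).2 - (v ⟨i, by omega⟩).2))
    (j : ℕ) (hj : j + 1 < n) (r : ℝ) (hr0 : 0 ≤ r) (_hr1 : r ≤ 1)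
    (f1 : t'.1 = (v ⟨j, by omega⟩).1 + r * ((v ⟨j+1, hj⟩).1 - (v ⟨j, by omega⟩).1))
    (f2 : t'.2 = (v ⟨j, by omega⟩).2 + r * ((v ⟨j+1, hj⟩).2 - (v ⟨j, by omega⟩).2))
    (hij : i ≤ j) (hx : t.1 = t'.1) : t.2 = t'.2 := by
  have d1 := hmono ⟨i, by omega⟩ ⟨i+1, hi⟩ (by simp)
  have d2 := hmono ⟨j, by omega⟩ ⟨j+1, hj⟩ (by simp)
  rcases hij.eq_or_lt with rfl | hlt
  · have : s = r := by
      have : (s - r) * ((v ⟨i+1, hi⟩).1 - (v ⟨i, by omega⟩).1) = 0 := by linarith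
      rcases mul_eq_zero.1 this with h | h <;> linarith
    rw [e2, f2, this]
  · rcases (Nat.succ_le_of_lt hlt).eq_or_lt with rfl | hlt2
    · have h1 : (1 - s) * ((v ⟨i+1, hi⟩).1 - (v ⟨i, by omega⟩).1) +
          r * ((v ⟨i+1+1, hj⟩).1 - (v ⟨i+1, by omega⟩).1) = 0 := by
        simp only [Nat.succ_eq_add_one] at *
        linarith
      simp only [Nat.succ_eq_add_one] at *
      have p1 : 0 ≤ (1 - s) * ((v ⟨i+1, hi⟩).1 - (v ⟨i, by omega⟩).1) :=
        mul_nonneg (by linarith) (by linarith)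
      have p2 : 0 ≤ r * ((v ⟨i+1+1, hj⟩).1 - (v ⟨i+1, by omega⟩).1) :=
        mul_nonneg (by linarith) (by linarith)
      have q1 : s = 1 := by
        rcases mul_eq_zero.1 (show (1 - s) * ((v ⟨i+1, hi⟩).1 - (v ⟨i, by omega⟩).1) = 0 by
          linarith) with h | h <;> linarith
      have q2 : r = 0 := by
        rcases mul_eq_zero.1 (show r * ((v ⟨i+1+1, hj⟩).1 - (v ⟨i+1, by omega⟩).1) = 0 by
          linarith) with h | h <;> linarith
      rw [e2, f2, q1, q2]; ring
    · exfalso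
      have d3 := hmono ⟨i+1, hi⟩ ⟨j, by omega⟩ (by simpa using hlt2)
      nlinarith

lemma terrain_graph (n : ℕ) (hn : 2 ≤ n) (v : Fin n → ℝ × ℝ)
    (hmono : ∀ i j : Fin n, i < j → (v i).1 < (v j).1) (t t' : ℝ × ℝ)
    (ht : t ∈ terrain n hn v) (ht' : t' ∈ terrain n hn v) (hx : t.1 = t'.1) : t.2 = t'.2 := by
  obtain ⟨i, hi, s, hs0, hs1, e1, e2⟩ := (mem_terrain_iff ..).1 ht
  obtain ⟨j, hj, r, hr0, hr1, f1, f2⟩ := (mem_terrain_iff ..).1 ht'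
  rcases le_total i j with h | h
  · exact terrain_graph_aux n v hmono t t' i hi s hs0 hs1 e1 e2 j hj r hr0 hr1 f1 f2 h hx
  · exact (terrain_graph_aux n v hmono t' t j hj r hr0 hr1 f1 f2 i hi s hs0 hs1 e1 e2 h hx.symm).symm

lemma terrain_lt (n : ℕ) (hn : 2 ≤ n) (v : Fin n → ℝ × ℝ)
    (h : ℝ) (hh : ∀ i : Fin n, (v i).2 < h) (t : ℝ × ℝ)
    (ht : t ∈ terrain n hn v) : t.2 < h := by
  obtain ⟨i, hi, s, hs0, hs1, e1, e2⟩ := (mem_terrain_iff ..).1 ht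
  have h1 := hh ⟨i, by omega⟩
  have h2 := hh ⟨i+1, hi⟩
  rw [e2]
  rcases hs0.eq_or_lt with rfl | hs
  · linarith
  · nlinarith

lemma terrain_range (n : ℕ) (hn : 2 ≤ n) (v : Fin n → ℝ × ℝ)
    (hmono : ∀ i j : Fin n, i < j → (v i).1 < (v j).1) (t : ℝ × ℝ)
    (ht : t ∈ terrain n hn v) :
    t.1 ∈ Icc (v ⟨0, by omega⟩).1 (v ⟨n - 1, by omega⟩).1 := by
  obtain ⟨i, hi, s, hs0, hs1, e1, e2⟩ := (mem_terrain_iff ..).1 ht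
  have hm : Monotone (fun i => (v i).1) := StrictMono.monotone (fun i j hij => hmono i j hij)
  have h1 : (v ⟨0, by omega⟩).1 ≤ (v ⟨i, by omega⟩).1 := hm (by simp)
  have h2 : (v ⟨i+1, hi⟩).1 ≤ (v ⟨n-1, by omega⟩).1 :=
    hm (show (⟨i+1, hi⟩ : Fin n) ≤ ⟨n-1, by omega⟩ from by simp only [Fin.mk_le_mk]; omega)
  have d1 := hmono ⟨i, by omega⟩ ⟨i+1, hi⟩ (by simp)
  rw [e1]
  constructor <;> nlinarith

/-- Characterisation of visibility by linear inequalities. -/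
lemma sees_iff (T : Set (ℝ × ℝ)) (hT : ∀ t ∈ T, ∀ t' ∈ T, t.1 = t'.1 → t.2 = t'.2)
    (h : ℝ) (hh : ∀ t ∈ T, t.2 < h) (w : ℝ × ℝ) (hw : w ∈ T) (x : ℝ) :
    seesT T w (x, h) ↔ ∀ t ∈ T, t.1 ∈ uIcc w.1 x →
      (t.2 - w.2) * |x - w.1| ≤ (h - w.2) * |t.1 - w.1| := by
  unfold seesT onAbove
  constructor
  · intro H t ht htx
    rw [← segment_eq_uIcc, segment_eq_image'] at htx
    obtain ⟨s, ⟨hs0, hs1⟩, hs⟩ := htx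
    simp only [smul_eq_mul] at hs
    have := H (w + s • ((x, h) - w)) (by rw [segment_eq_image']; exact ⟨s, ⟨hs0, hs1⟩, rfl⟩) t ht
      (by simp [← hs])
    simp only [Prod.snd_add, Prod.smul_snd, Prod.snd_sub, smul_eq_mul] at this
    have e : |t.1 - w.1| = s * |x - w.1| := by
      rw [← hs, add_sub_cancel_left, abs_mul, abs_of_nonneg hs0]
    rw [e]
    nlinarith [abs_nonneg (x - w.1)]
  · intro H p hp t ht htp
    rw [segment_eq_image'] at hp
    obtain ⟨s, ⟨hs0, hs1⟩, rfl⟩ := hp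
    simp only [Prod.fst_add, Prod.smul_fst, Prod.fst_sub, Prod.snd_add, Prod.smul_snd,
      Prod.snd_sub, smul_eq_mul] at htp ⊢
    by_cases hx : x = w.1
    · have := hT t ht w hw (by rw [htp, hx]; ring)
      have := hh w hw
      nlinarith
    · have h1 := H t ht (by
        rw [← segment_eq_uIcc, segment_eq_image']
        exact ⟨s, ⟨hs0, hs1⟩, by simp [htp]⟩)
      have e : |t.1 - w.1| = s * |x - w.1| := by
        rw [htp, add_sub_cancel_left, abs_mul, abs_of_nonneg hs0]
      rw [e] at h1
      have hp : 0 < |x - w.1| := abs_pos.2 (sub_ne_zero.2 hx)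
      have : t.2 - w.2 ≤ (h - w.2) * s := by
        refine le_of_mul_le_mul_right ?_ hp
        linarith
      linarith

/-- The visible part of the altitude line is a closed interval. -/
lemma vis_interval (T : Set (ℝ × ℝ)) (hT : ∀ t ∈ T, ∀ t' ∈ T, t.1 = t'.1 → t.2 = t'.2)
    (h : ℝ) (hh : ∀ t ∈ T, t.2 < h) (L R : ℝ) (w : ℝ × ℝ) (hw : w ∈ T) (hwx : w.1 ∈ Icc L R) :
    ∃ a b : ℝ, L ≤ a ∧ a ≤ b ∧ b ≤ R ∧
      ∀ x, (x ∈ Icc L R ∧ seesT T w (x, h)) ↔ x ∈ Icc a b := by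
  set S : Set ℝ := {x | x ∈ Icc L R ∧ seesT T w (x, h)} with hS
  have hwS : w.1 ∈ S := by
    refine ⟨hwx, (sees_iff T hT h hh w hw _).2 fun t ht htx => ?_⟩
    have := hh w hw
    simp only [sub_self, abs_zero, mul_zero]
    positivity [sub_pos.2 this]
  have hstar : ∀ x ∈ S, ∀ y ∈ uIcc w.1 x, y ∈ S := by
    intro x hx y hy
    refine ⟨?_, (sees_iff T hT h hh w hw _).2 fun t ht hty => ?_⟩
    · exact uIcc_subset_Icc hwx hx.1 hy
    · have h1 := (sees_iff T hT h hh w hw _).1 hx.2 t ht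
        (uIcc_subset_uIcc left_mem_uIcc hy hty)
      have h2 : |y - w.1| ≤ |x - w.1| := abs_sub_left_of_mem_uIcc hy
      have := hh w hw
      rcases le_total t.2 w.2 with h3 | h3
      · have : 0 ≤ (h - w.2) * |t.1 - w.1| := mul_nonneg (by linarith) (abs_nonneg _)
        nlinarith [abs_nonneg (y - w.1)]
      · nlinarith
  have hclosed : IsClosed S := by
    rw [← closure_subset_iff_isClosed]
    intro y hy
    obtain ⟨u, hu, hlim⟩ := mem_closure_iff_seq_limit.1 hy
    refine ⟨isClosed_Icc.mem_of_tendsto hlim (Filter.Eventually.of_forall fun k => (hu k).1),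
      (sees_iff T hT h hh w hw _).2 fun t ht hty => ?_⟩
    by_cases e1 : t.1 = y
    · rw [e1]
      exact mul_le_mul_of_nonneg_right (by linarith [hh t ht]) (abs_nonneg _)
    by_cases e2 : t.1 = w.1
    · rw [hT t ht w hw e2, e2]; simp
    have hev : ∀ᶠ k in Filter.atTop, t.1 ∈ uIcc w.1 (u k) := by
      rcases mem_uIcc.1 hty with ⟨h1, h2⟩ | ⟨h1, h2⟩
      · filter_upwards [hlim.eventually_const_lt (lt_of_le_of_ne h2 e1)] with k hk
        exact mem_uIcc.2 (Or.inl ⟨h1, hk.le⟩)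
      · filter_upwards [hlim.eventually_lt_const (lt_of_le_of_ne h1 (Ne.symm e1))] with k hk
        exact mem_uIcc.2 (Or.inr ⟨hk.le, h2⟩)
    have hl2 : Filter.Tendsto (fun k => (t.2 - w.2) * |u k - w.1|) Filter.atTop
        (nhds ((t.2 - w.2) * |y - w.1|)) := ((hlim.sub_const _).abs).const_mul _
    refine le_of_tendsto hl2 ?_
    filter_upwards [hev] with k hk
    exact (sees_iff T hT h hh w hw _).1 (hu k).2 t ht hk
  have hsub : S ⊆ Icc L R := fun x hx => hx.1
  have hcomp : IsCompact S := isCompact_Icc.of_isClosed_subset hclosed hsub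
  have hne : S.Nonempty := ⟨_, hwS⟩
  have ha := hcomp.sInf_mem hne
  have hb := hcomp.sSup_mem hne
  refine ⟨sInf S, sSup S, ha.1.1, csInf_le hcomp.bddBelow hb, hb.1.2, fun x => ⟨fun hx =>
    ⟨csInf_le hcomp.bddBelow hx, le_csSup hcomp.bddAbove hx⟩, fun hx => ?_⟩⟩
  rcases le_total x w.1 with h1 | h1
  · exact hstar _ ha x (mem_uIcc.2 (Or.inr ⟨hx.1, h1⟩))
  · exact hstar _ hb x (mem_uIcc.2 (Or.inl ⟨h1, hx.2⟩))

/-- Greedy piercing of a family of closed intervals. -/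
lemma greedy {α : Type*} [DecidableEq α] (T : Set α) (a b : α → ℝ) (L R : ℝ)
    (hLa : ∀ w ∈ T, L ≤ a w) (hab : ∀ w ∈ T, a w ≤ b w) (hbR : ∀ w ∈ T, b w ≤ R) :
    ∀ (k : ℕ) (P : Finset ℝ) (c : ℝ), P.card ≤ k → (∀ p ∈ P, c < p) →
      (∀ w ∈ T, c < a w → ∃ p ∈ P, p ∈ Icc (a w) (b w)) →
      ∃ (G : Finset ℝ) (W : Finset α), G.card = W.card ∧ (∀ g ∈ G, c < g ∧ L ≤ g ∧ g ≤ R) ∧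
        (∀ w ∈ W, w ∈ T ∧ c < a w) ∧
        (∀ w ∈ T, c < a w → ∃ g ∈ G, g ∈ Icc (a w) (b w)) ∧
        (∀ w ∈ W, ∀ w' ∈ W, w ≠ w' → Icc (a w) (b w) ∩ Icc (a w') (b w') = ∅) := by
  intro k
  induction k with
  | zero =>
    intro P c hP _ hpierce
    have : P = ∅ := by simpa using hP
    subst this
    exact ⟨∅, ∅, rfl, by simp, by simp, fun w hw hc => hpierce w hw hc, by simp⟩
  | succ k ih =>
    intro P c hP hPc hpierce
    by_cases hemp : ∃ w ∈ T, c < a w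
    swap
    · push Not at hemp
      exact ⟨∅, ∅, rfl, by simp, by simp, fun w hw hc => absurd hc (not_lt.2 (hemp w hw)), by simp⟩
    set B : Set ℝ := b '' {w | w ∈ T ∧ c < a w} with hB
    have hBne : B.Nonempty := by
      obtain ⟨w, hw, hc⟩ := hemp
      exact ⟨_, w, ⟨hw, hc⟩, rfl⟩
    have hBL : ∀ y ∈ B, L ≤ y := by
      rintro _ ⟨w, ⟨hw, hc⟩, rfl⟩
      exact (hLa w hw).trans (hab w hw)
    have hBb : BddBelow B := ⟨L, hBL⟩
    set g := sInf B with hg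
    have hgle : ∀ w ∈ T, c < a w → g ≤ b w := fun w hw hc => csInf_le hBb ⟨w, ⟨hw, hc⟩, rfl⟩
    have hgex : ∀ m, g < m → ∃ w ∈ T, c < a w ∧ b w < m := by
      intro m hm
      obtain ⟨_, ⟨w, ⟨hw, hc⟩, rfl⟩, hlt⟩ := exists_lt_of_csInf_lt hBne hm
      exact ⟨w, hw, hc, hlt⟩
    have hfin : ∀ Q : Finset ℝ, (∀ q ∈ Q, g < q) → ∃ m, g < m ∧ ∀ q ∈ Q, m ≤ q := by
      intro Q hQ
      rcases Q.eq_empty_or_nonempty with rfl | hne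
      · exact ⟨g + 1, by linarith, by simp⟩
      · exact ⟨Q.min' hne, hQ _ (Q.min'_mem hne), fun q hq => Q.min'_le q hq⟩
    obtain ⟨p, hpP, hpg⟩ : ∃ p ∈ P, p ≤ g := by
      by_contra hcon
      push Not at hcon
      obtain ⟨m, hm, hmQ⟩ := hfin P hcon
      obtain ⟨w, hw, hc, hlt⟩ := hgex m hm
      obtain ⟨p, hp, hpI⟩ := hpierce w hw hc
      linarith [hmQ p hp, hpI.2]
    have hcg : c < g := (hPc p hpP).trans_le hpg
    obtain ⟨G, W, hcard, hG, hW, hGp, hWd⟩ := ih (P.filter (fun q => g < q)) g (by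
        have : (P.filter (fun q => g < q)).card < P.card :=
          Finset.card_lt_card (Finset.filter_ssubset.2 ⟨p, hpP, not_lt.2 hpg⟩)
        omega) (by simp) (by
        intro w hw hc
        obtain ⟨q, hq, hqI⟩ := hpierce w hw (hcg.trans hc)
        exact ⟨q, Finset.mem_filter.2 ⟨hq, hc.trans_le hqI.1⟩, hqI⟩)
    obtain ⟨m, hm, hmW⟩ := hfin (W.image a) (by
      intro q hq
      obtain ⟨w, hw, rfl⟩ := Finset.mem_image.1 hq
      exact (hW w hw).2)
    obtain ⟨w0, hw0, hc0, hlt0⟩ := hgex m hm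
    have hsep : ∀ w ∈ W, b w0 < a w := fun w hw =>
      hlt0.trans_le (hmW _ (Finset.mem_image_of_mem a hw))
    have hw0W : w0 ∉ W := fun hmem => by linarith [hsep w0 hmem, hab w0 hw0]
    have hgG : g ∉ G := fun hmem => lt_irrefl _ (hG g hmem).1
    refine ⟨insert g G, insert w0 W, ?_, ?_, ?_, ?_, ?_⟩
    · rw [Finset.card_insert_of_notMem hw0W, Finset.card_insert_of_notMem hgG, hcard]
    · intro x hx
      rcases Finset.mem_insert.1 hx with rfl | hx
      · exact ⟨hcg, le_csInf hBne hBL, (hgle w0 hw0 hc0).trans (hbR w0 hw0)⟩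
      · exact ⟨hcg.trans (hG x hx).1, (hG x hx).2⟩
    · intro w hw
      rcases Finset.mem_insert.1 hw with rfl | hw
      · exact ⟨hw0, hc0⟩
      · exact ⟨(hW w hw).1, hcg.trans (hW w hw).2⟩
    · intro w hw hc
      by_cases hwg : g < a w
      · obtain ⟨x, hx, hxI⟩ := hGp w hw hwg
        exact ⟨x, Finset.mem_insert_of_mem hx, hxI⟩
      · exact ⟨g, Finset.mem_insert_self _ _, not_lt.1 hwg, hgle w hw hc⟩
    · intro w hw w' hw' hne
      rw [Set.eq_empty_iff_forall_notMem]
      rcases Finset.mem_insert.1 hw with rfl | hw1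
      · rcases Finset.mem_insert.1 hw' with rfl | hw2
        · exact absurd rfl hne
        · rintro x ⟨h1, h2⟩
          linarith [hsep w' hw2, h1.2, h2.1]
      · rcases Finset.mem_insert.1 hw' with rfl | hw2
        · rintro x ⟨h1, h2⟩
          linarith [hsep w hw1, h1.1, h2.2]
        · exact Set.eq_empty_iff_forall_notMem.1 (hWd w hw1 w' hw2 hne)

lemma vertex_sees (n : ℕ) (hn : 2 ≤ n) (v : Fin n → ℝ × ℝ)
    (hmono : ∀ i j : Fin n, i < j → (v i).1 < (v j).1)
    (h : ℝ) (hh : ∀ i : Fin n, (v i).2 < h) (w : ℝ × ℝ) (hw : w ∈ terrain n hn v) :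
    ∃ i, seesT (terrain n hn v) w ((v i).1, h) := by
  have hT := terrain_graph n hn v hmono
  obtain ⟨i, hi, r, hr0, hr1, e1, e2⟩ := (mem_terrain_iff ..).1 hw
  refine ⟨⟨i, by omega⟩, (sees_iff _ (fun t ht t' ht' => hT t t' ht ht') h
    (terrain_lt n hn v h hh) w hw _).2 fun t ht htx => ?_⟩
  have d := hmono ⟨i, by omega⟩ ⟨i+1, hi⟩ (by simp)
  have hvh := hh ⟨i, by omega⟩
  have hd : 0 < (v ⟨i+1, hi⟩).1 - (v ⟨i, by omega⟩).1 := by linarith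
  have hxw : (v ⟨i, by omega⟩).1 ≤ w.1 := by rw [e1]; nlinarith
  rw [uIcc_of_ge hxw] at htx
  obtain ⟨s, hs⟩ : ∃ s, t.1 = (v ⟨i, by omega⟩).1 +
      s * ((v ⟨i+1, hi⟩).1 - (v ⟨i, by omega⟩).1) :=
    ⟨(t.1 - (v ⟨i, by omega⟩).1) / ((v ⟨i+1, hi⟩).1 - (v ⟨i, by omega⟩).1), by
      field_simp; ring⟩
  have hs0 : 0 ≤ s := by
    by_contra hc
    nlinarith [htx.1]
  have hsr : s ≤ r := by
    by_contra hc
    nlinarith [htx.2]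
  have ht2 : t.2 = (v ⟨i, by omega⟩).2 + s * ((v ⟨i+1, hi⟩).2 - (v ⟨i, by omega⟩).2) := by
    refine hT t (t.1, _) ht ((mem_terrain_iff ..).2 ⟨i, hi, s, hs0, hsr.trans hr1, hs, rfl⟩) rfl
  rw [abs_of_nonpos (by linarith), abs_of_nonpos (by linarith [htx.2]), e1, e2, hs, ht2]
  generalize (v ⟨i+1, hi⟩).1 - (v ⟨i, by omega⟩).1 = D at hd
  generalize (v ⟨i+1, hi⟩).2 - (v ⟨i, by omega⟩).2 = E
  have : 0 ≤ (h - (v ⟨i, by omega⟩).2) * ((r - s) * D) :=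
    mul_nonneg (by linarith) (mul_nonneg (by linarith) hd.le)
  nlinarith

lemma mem_altLine_iff (n : ℕ) (hn : 2 ≤ n) (v : Fin n → ℝ × ℝ)
    (hmono : ∀ i j : Fin n, i < j → (v i).1 < (v j).1) (h : ℝ) (p : ℝ × ℝ) :
    p ∈ altLine n hn v h ↔ p.1 ∈ Icc (v ⟨0, by omega⟩).1 (v ⟨n - 1, by omega⟩).1 ∧ p.2 = h := by
  have d : (v ⟨0, by omega⟩).1 ≤ (v ⟨n-1, by omega⟩).1 :=
    (hmono ⟨0, by omega⟩ ⟨n-1, by omega⟩ (by simp only [Fin.mk_lt_mk]; omega)).le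
  unfold altLine
  rw [← segment_eq_Icc d, segment_eq_image', segment_eq_image']
  constructor
  · rintro ⟨s, hs, rfl⟩
    exact ⟨⟨s, hs, by simp⟩, by simp⟩
  · rintro ⟨⟨s, hs, h1⟩, h2⟩
    exact ⟨s, hs, Prod.ext (by simpa using h1) (by simp [h2])⟩

theorem stmt_11 (n : ℕ) (hn : 2 ≤ n) (v : Fin n → ℝ × ℝ)
    (hmono : ∀ i j : Fin n, i < j → (v i).1 < (v j).1)
    (h : ℝ) (hh : ∀ i : Fin n, (v i).2 < h) :
    ∃ G W : Set (ℝ × ℝ),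
      G.Finite ∧ G ⊆ altLine n hn v h ∧
      terrain n hn v ⊆ (⋃ g ∈ G, visT n hn v g) ∧
      W.Finite ∧ W ⊆ terrain n hn v ∧
      (∀ w ∈ W, ∀ w' ∈ W, w ≠ w' → visA n hn v h w ∩ visA n hn v h w' = ∅) ∧
      G.ncard = W.ncard ∧
      ∀ G' : Set (ℝ × ℝ), G'.Finite → G' ⊆ altLine n hn v h →
        terrain n hn v ⊆ (⋃ g ∈ G', visT n hn v g) → G.ncard ≤ G'.ncard := by
  have hT : ∀ t ∈ terrain n hn v, ∀ t' ∈ terrain n hn v, t.1 = t'.1 → t.2 = t'.2 :=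
    fun t ht t' ht' => terrain_graph n hn v hmono t t' ht ht'
  have hlt := terrain_lt n hn v h hh
  have hran := terrain_range n hn v hmono
  have hA := mem_altLine_iff n hn v hmono h
  set L := (v ⟨0, by omega⟩).1 with hL
  set R := (v ⟨n - 1, by omega⟩).1 with hR
  have hsymm : ∀ p q, seesT (terrain n hn v) p q → seesT (terrain n hn v) q p := by
    intro p q hpq
    unfold seesT at *
    rwa [segment_symm]
  have hint : ∀ w : ℝ × ℝ, ∃ a b : ℝ, w ∈ terrain n hn v → (L ≤ a ∧ a ≤ b ∧ b ≤ R ∧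
      ∀ x, (x ∈ Icc L R ∧ seesT (terrain n hn v) w (x, h)) ↔ x ∈ Icc a b) := by
    intro w
    by_cases hw : w ∈ terrain n hn v
    · obtain ⟨a, b, hab⟩ := vis_interval _ hT h hlt L R w hw (hran w hw)
      exact ⟨a, b, fun _ => hab⟩
    · exact ⟨0, 0, fun hw' => absurd hw' hw⟩
  choose a b hab using hint
  have hm : Monotone (fun i => (v i).1) := StrictMono.monotone (fun i j hij => hmono i j hij)
  have hvran : ∀ i, (v i).1 ∈ Icc L R := fun i =>
    ⟨hm (show (⟨0, by omega⟩ : Fin n) ≤ i from by simp [Fin.le_def]),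
      hm (show i ≤ (⟨n - 1, by omega⟩ : Fin n) from by simp only [Fin.le_def]; omega)⟩
  obtain ⟨G, W, hcard, hG, hW, hGp, hWd⟩ := greedy (terrain n hn v) a b L R
    (fun w hw => (hab w hw).1) (fun w hw => (hab w hw).2.1) (fun w hw => (hab w hw).2.2.1)
    _ (Finset.univ.image fun i => (v i).1) (L - 1) le_rfl
    (by
      intro p hp
      obtain ⟨i, -, rfl⟩ := Finset.mem_image.1 hp
      linarith [(hvran i).1])
    (by
      intro w hw _
      obtain ⟨i, hi⟩ := vertex_sees n hn v hmono h hh w hw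
      exact ⟨_, Finset.mem_image_of_mem _ (Finset.mem_univ i),
        ((hab w hw).2.2.2 _).1 ⟨hvran i, hi⟩⟩)
  have hvis : ∀ w ∈ terrain n hn v, ∀ p ∈ visA n hn v h w, p.1 ∈ Icc (a w) (b w) := by
    rintro w hw ⟨x, y⟩ ⟨hp, hs⟩
    obtain ⟨h1, h2⟩ := (hA _).1 hp
    simp only at h2
    subst h2
    exact ((hab w hw).2.2.2 x).1 ⟨h1, hs⟩
  have hdisj : ∀ w ∈ (W : Set (ℝ × ℝ)), ∀ w' ∈ (W : Set (ℝ × ℝ)), w ≠ w' →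
      visA n hn v h w ∩ visA n hn v h w' = ∅ := by
    intro w hw w' hw' hne
    rw [Set.eq_empty_iff_forall_notMem]
    rintro p ⟨hp, hp'⟩
    exact Set.eq_empty_iff_forall_notMem.1 (hWd w hw w' hw' hne) p.1
      ⟨hvis w (hW w hw).1 p hp, hvis w' (hW w' hw').1 p hp'⟩
  have hcardS : ((fun x : ℝ => (x, h)) '' (G : Set ℝ)).ncard = (W : Set (ℝ × ℝ)).ncard := by
    rw [Set.ncard_image_of_injective _ (fun x y hxy => (Prod.ext_iff.1 hxy).1),
      Set.ncard_coe_finset, Set.ncard_coe_finset, hcard]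
  refine ⟨(fun x : ℝ => (x, h)) '' (G : Set ℝ), W, G.finite_toSet.image _, ?_, ?_,
    W.finite_toSet, fun w hw => (hW w hw).1, hdisj, hcardS, ?_⟩
  · rintro _ ⟨x, hx, rfl⟩
    exact (hA _).2 ⟨(hG x hx).2, rfl⟩
  · intro w hw
    obtain ⟨g, hg, hgI⟩ := hGp w hw (by linarith [(hab w hw).1])
    simp only [mem_iUnion]
    exact ⟨(g, h), ⟨g, hg, rfl⟩, hw, hsymm _ _ (((hab w hw).2.2.2 g).2 hgI).2⟩
  · intro G' hfin hsub hcov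
    rw [hcardS]
    have hex : ∀ w : ℝ × ℝ, ∃ g, w ∈ terrain n hn v → g ∈ G' ∧ g ∈ visA n hn v h w := by
      intro w
      by_cases hw : w ∈ terrain n hn v
      · have := hcov hw
        simp only [mem_iUnion] at this
        obtain ⟨g, hg, hgv⟩ := this
        exact ⟨g, fun _ => ⟨hg, hsub hg, hsymm _ _ hgv.2⟩⟩
      · exact ⟨0, fun hw' => absurd hw' hw⟩
    choose f hf using hex
    refine Set.ncard_le_ncard_of_injOn f (fun w hw => (hf w (hW w hw).1).1) ?_ hfin
    intro w hw w' hw' he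
    by_contra hne
    refine Set.eq_empty_iff_forall_notMem.1 (hdisj w hw w' hw' hne) (f w)
      ⟨(hf w (hW w hw).1).2, ?_⟩
    rw [he]
    exact (hf w' (hW w' hw').1).2
end

section
/- (Uni-monotone polygons are perfect) For every uni-monotone polygon P, the minimum cardinality of a guard cover equals the maximum cardinality of a witness set: there exists m ∈ ℕ such that m is the least element of {k : ∃ finite guard cover G ⊆ P with Set.ncard G = k} and m is the greatest element of {k : ∃ finite witness set W ⊆ P with Set.ncard W = k}. -/
open Set

theorem pierce {ι : Type*} (l r : ι → ℝ) (a : ℝ) (k : ℕ) : ∀ (S : Set ι),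
    (∀ i ∈ S, l i ≤ r i) → (∀ i ∈ S, a ≤ r i) →
    (∀ T : Finset ι, (T : Set ι) ⊆ S →
      (∀ i ∈ T, ∀ j ∈ T, i ≠ j → r i < l j ∨ r j < l i) → T.card ≤ k) →
    ∃ X : Finset ℝ, X.card ≤ k ∧ ∀ i ∈ S, ∃ x ∈ X, l i ≤ x ∧ x ≤ r i := by
  classical
  induction k with
  | zero =>
    intro S hlr ha hT
    refine ⟨∅, by simp, ?_⟩
    intro i hi
    have := hT {i} (by simpa using hi) (by
      intro x hx y hy hxy
      simp at hx hy
      exact absurd (hx.trans hy.symm) hxy)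
    simp at this
  | succ k ih =>
    intro S hlr ha hT
    by_cases hS : S = ∅
    · exact ⟨∅, by simp, by simp [hS]⟩
    obtain ⟨i0, hi0⟩ := Set.nonempty_iff_ne_empty.mpr hS
    set ρ := sInf (r '' S) with hρ
    have hbdd : BddBelow (r '' S) := ⟨a, by rintro _ ⟨i, hi, rfl⟩; exact ha i hi⟩
    have hne : (r '' S).Nonempty := ⟨_, i0, hi0, rfl⟩
    obtain ⟨X, hX, hX2⟩ := ih {i ∈ S | ρ < l i} (fun i hi => hlr i hi.1) (fun i hi => ha i hi.1) (by
      intro T hTS hTd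
      by_cases hTe : T.Nonempty
      · obtain ⟨j, hj, hjm⟩ := T.exists_min_image l hTe
        have hjl : ρ < l j := (hTS hj).2
        obtain ⟨_, ⟨i, hi, rfl⟩, hil⟩ := exists_lt_of_csInf_lt hne hjl
        have hiT : i ∉ T := by
          intro hiT
          have := hjm i hiT
          have := hlr i hi
          linarith
        have := hT (insert i T) (by
          intro x hx
          simp at hx
          rcases hx with rfl | hx
          · exact hi
          · exact (hTS hx).1) (by
          intro x hx y hy hxy
          simp at hx hy
          rcases hx with rfl | hx <;> rcases hy with rfl | hy
          · exact absurd rfl hxy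
          · left; exact lt_of_lt_of_le hil (hjm y hy)
          · right; exact lt_of_lt_of_le hil (hjm x hx)
          · exact hTd x hx y hy hxy)
        rw [Finset.card_insert_of_notMem hiT] at this
        omega
      · simp [Finset.not_nonempty_iff_eq_empty.mp hTe])
    refine ⟨insert ρ X, (Finset.card_insert_le _ _).trans (by omega), ?_⟩
    intro i hi
    by_cases hl : ρ < l i
    · obtain ⟨x, hx, hx2⟩ := hX2 i ⟨hi, hl⟩
      exact ⟨x, Finset.mem_insert_of_mem hx, hx2⟩
    · exact ⟨ρ, Finset.mem_insert_self _ _, not_lt.mp hl, csInf_le hbdd ⟨i, hi, rfl⟩⟩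

/-- Top positions seeing `q`. -/
def topSee (P : Set (ℝ × ℝ)) (h : ℝ) (q : ℝ × ℝ) : Set ℝ := {x | seesIn P (x, h) q}

/-- If `g` sees `q`, so does every top point between the vertical through `g` and that through `q`. -/
theorem sees_lift {P : Set (ℝ × ℝ)} {h : ℝ}
    (hup : ∀ x y y' : ℝ, (x, y) ∈ P → y ≤ y' → y' ≤ h → (x, y') ∈ P)
    (hle : ∀ p ∈ P, p.2 ≤ h) {g q : ℝ × ℝ} (hs : seesIn P g q)
    {s : ℝ} (hs0 : 0 ≤ s) (hs1 : s ≤ 1) :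
    (1 - s) * q.1 + s * g.1 ∈ topSee P h q := by
  have hg := hle _ (hs (left_mem_segment ℝ g q))
  have hq := hle _ (hs (right_mem_segment ℝ g q))
  rintro p ⟨u, t, hu, ht, hut, rfl⟩
  obtain rfl : t = 1 - u := by linarith
  have hus : u * s ≤ u := by nlinarith
  have hus0 : 0 ≤ u * s := by positivity
  have hmem : (u * s) • g + (1 - u * s) • q ∈ P :=
    hs ⟨u * s, 1 - u * s, hus0, by linarith, by ring, rfl⟩
  have := hup _ _ ((u * h + (1 - u) * q.2)) hmem (by
    simp
    nlinarith) (by nlinarith)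
  convert this using 1
  ext
  · simp; ring
  · simp

theorem abstract_perfect (P : Set (ℝ × ℝ)) (a b h : ℝ)
    (hup : ∀ x y y' : ℝ, (x, y) ∈ P → y ≤ y' → y' ≤ h → (x, y') ∈ P)
    (hle : ∀ p ∈ P, p.2 ≤ h) (ha : ∀ p ∈ P, a ≤ p.1) (hb : ∀ p ∈ P, p.1 ≤ b)
    (hcl : IsClosed P)
    (G0 : Set (ℝ × ℝ)) (hG0 : G0.Finite) (hG0P : G0 ⊆ P) (hG0c : P ⊆ ⋃ g ∈ G0, visIn P g) :
    ∃ m : ℕ,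
      IsLeast {k : ℕ | ∃ G : Set (ℝ × ℝ), G.Finite ∧ G ⊆ P ∧
        P ⊆ (⋃ g ∈ G, visIn P g) ∧ G.ncard = k} m ∧
      IsGreatest {k : ℕ | ∃ W : Set (ℝ × ℝ), W.Finite ∧ W ⊆ P ∧
        (∀ w ∈ W, ∀ w' ∈ W, w ≠ w' → visIn P w ∩ visIn P w' = ∅) ∧ W.ncard = k} m := by
  classical
  -- weak duality
  have weak : ∀ G W : Set (ℝ × ℝ), G.Finite → G ⊆ P → P ⊆ (⋃ g ∈ G, visIn P g) → W ⊆ P →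
      (∀ w ∈ W, ∀ w' ∈ W, w ≠ w' → visIn P w ∩ visIn P w' = ∅) → W.ncard ≤ G.ncard := by
    intro G W hGf hGP hGc hWP hW
    have : ∀ w ∈ W, ∃ g ∈ G, w ∈ visIn P g := by
      intro w hw
      simpa using hGc (hWP hw)
    choose! F hFG hF using this
    refine Set.ncard_le_ncard_of_injOn F hFG ?_ hGf
    intro w hw w' hw' he
    by_contra hne
    have h1 : F w ∈ visIn P w ∩ visIn P w' := by
      refine ⟨⟨hGP (hFG w hw), ?_⟩, ⟨hGP (hFG w hw), ?_⟩⟩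
      · have := (hF w hw).2
        unfold seesIn at this ⊢
        rwa [segment_symm]
      · have := (hF w' hw').2
        rw [← he] at this
        unfold seesIn at this ⊢
        rwa [segment_symm]
    rw [hW w hw w' hw' hne] at h1
    exact h1
  set Q : ℕ → Prop := fun k => ∃ W : Set (ℝ × ℝ), W.Finite ∧ W ⊆ P ∧
        (∀ w ∈ W, ∀ w' ∈ W, w ≠ w' → visIn P w ∩ visIn P w' = ∅) ∧ W.ncard = k with hQ
  have hQ0 : Q 0 := ⟨∅, by simp⟩
  have hQb : ∀ k, Q k → k ≤ G0.ncard := by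
    rintro k ⟨W, _, h2, h3, rfl⟩
    exact weak G0 W hG0 hG0P hG0c h2 h3
  set m := Nat.findGreatest Q G0.ncard with hm
  have hQm : Q m := Nat.findGreatest_spec (Nat.zero_le _) hQ0
  have hmax : ∀ k, Q k → k ≤ m := fun k hk => Nat.le_findGreatest (hQb k hk) hk
  -- intervals
  have hself : ∀ q ∈ P, q.1 ∈ topSee P h q := by
    intro q hq
    have hs : seesIn P q q := by
      unfold seesIn
      simpa using hq
    simpa using sees_lift hup hle hs (le_refl 0) zero_le_one
  have htop : ∀ q x, x ∈ topSee P h q → (x, h) ∈ P := fun q x hx =>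
    hx (left_mem_segment ℝ _ _)
  have hcomp : ∀ q, IsCompact (topSee P h q) := by
    intro q
    have hc : IsClosed (topSee P h q) := by
      have : topSee P h q = ⋂ t ∈ Icc (0:ℝ) 1, {x : ℝ | (AffineMap.lineMap (x, h) q t : ℝ × ℝ) ∈ P} := by
        ext x
        simp only [topSee, seesIn, segment_eq_image_lineMap, Set.mem_ofPred_eq, Set.image_subset_iff,
          Set.mem_iInter]
        rfl
      rw [this]
      refine isClosed_biInter fun t _ => hcl.preimage ?_
      simp only [AffineMap.lineMap_apply_module]
      fun_prop
    refine isCompact_Icc.of_isClosed_subset hc (s := Icc a b) ?_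
    intro x hx
    exact ⟨ha _ (htop q x hx), hb _ (htop q x hx)⟩
  have hord : ∀ q, ∀ x ∈ topSee P h q, ∀ x' ∈ topSee P h q, ∀ z, x ≤ z → z ≤ x' →
      z ∈ topSee P h q := by
    intro q x hx x' hx' z hz hz'
    have key : ∀ y ∈ topSee P h q, z ∈ segment ℝ q.1 y → z ∈ topSee P h q := by
      rintro y hy ⟨u, t, hu, ht, hut, rfl⟩
      have := sees_lift hup hle hy ht (by linarith : t ≤ 1)
      obtain rfl : u = 1 - t := by linarith
      simpa using this
    rcases le_total z q.1 with hzq | hzq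
    · apply key x hx
      rw [segment_symm, segment_eq_Icc (hz.trans hzq)]
      exact ⟨hz, hzq⟩
    · apply key x' hx'
      rw [segment_eq_Icc (hzq.trans hz')]
      exact ⟨hzq, hz'⟩
  have hlmem : ∀ q ∈ P, sInf (topSee P h q) ∈ topSee P h q := fun q hq =>
    (hcomp q).sInf_mem ⟨_, hself q hq⟩
  have hrmem : ∀ q ∈ P, sSup (topSee P h q) ∈ topSee P h q := fun q hq =>
    (hcomp q).sSup_mem ⟨_, hself q hq⟩
  obtain ⟨X, hXc, hX⟩ := pierce (fun q => sInf (topSee P h q)) (fun q => sSup (topSee P h q)) a m P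
    (fun q hq => csInf_le (hcomp q).bddBelow (hrmem q hq))
    (fun q hq => ha _ (htop q _ (hrmem q hq))) (by
      intro T hTP hTd
      apply hmax
      refine ⟨T, T.finite_toSet, hTP, ?_, Set.ncard_coe_finset T⟩
      intro w hw w' hw' hne
      rw [Set.eq_empty_iff_forall_notMem]
      rintro z ⟨⟨hzP, hz⟩, ⟨_, hz'⟩⟩
      have lift : ∀ u, seesIn P u z → z.1 ∈ topSee P h u := by
        intro u hu
        have hu' : seesIn P z u := by
          unfold seesIn at hu ⊢
          rwa [segment_symm]
        simpa using sees_lift hup hle hu' zero_le_one (le_refl 1)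
      have h1 := lift w hz
      have h2 := lift w' hz'
      have a1 := csInf_le (hcomp w).bddBelow h1
      have a2 := le_csSup (hcomp w).bddAbove h1
      have a3 := csInf_le (hcomp w').bddBelow h2
      have a4 := le_csSup (hcomp w').bddAbove h2
      rcases hTd w hw w' hw' hne with h5 | h5
      · linarith
      · linarith)
  set G : Set (ℝ × ℝ) := ((fun x : ℝ => ((x, h) : ℝ × ℝ)) '' (X : Set ℝ)) ∩ P with hG
  have hGf : G.Finite := (X.finite_toSet.image _).subset Set.inter_subset_left
  have hGP : G ⊆ P := Set.inter_subset_right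
  have hGc : P ⊆ ⋃ g ∈ G, visIn P g := by
    intro q hq
    obtain ⟨x, hx, hx1, hx2⟩ := hX q hq
    have hxs := hord q _ (hlmem q hq) _ (hrmem q hq) x hx1 hx2
    exact Set.mem_biUnion (x := ((x, h) : ℝ × ℝ)) ⟨⟨x, hx, rfl⟩, htop q x hxs⟩ ⟨hq, hxs⟩
  have hGm : G.ncard ≤ m := by
    refine (Set.ncard_le_ncard Set.inter_subset_left (X.finite_toSet.image _)).trans ?_
    refine (Set.ncard_image_le X.finite_toSet).trans ?_
    rwa [Set.ncard_coe_finset]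
  obtain ⟨W, hWf, hWP, hWd, hWm⟩ := hQm
  refine ⟨m, ⟨⟨G, hGf, hGP, hGc, le_antisymm hGm ?_⟩, ?_⟩, ⟨W, hWf, hWP, hWd, hWm⟩, ?_⟩
  · rw [← hWm]; exact weak G W hGf hGP hGc hWP hWd
  · rintro k ⟨G', h1, h2, h3, rfl⟩
    rw [← hWm]; exact weak G' W h1 h2 h3 hWP hWd
  · intro k hk
    exact hmax k hk

/-- The trapezoid above the segment from `A` to `B`. -/
def trap (A B : ℝ × ℝ) (h : ℝ) : Set (ℝ × ℝ) :=
  {p | A.1 ≤ p.1 ∧ p.1 ≤ B.1 ∧ p.2 ≤ h ∧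
    (B.2 - A.2) * (p.1 - A.1) ≤ (p.2 - A.2) * (B.1 - A.1)}

theorem trap_closed (A B : ℝ × ℝ) (h : ℝ) : IsClosed (trap A B h) := by
  unfold trap
  simp only [Set.ofPred_and]
  refine IsClosed.inter ?_ (IsClosed.inter ?_ (IsClosed.inter ?_ ?_)) <;>
    exact isClosed_le (by fun_prop) (by fun_prop)

theorem trap_convex (A B : ℝ × ℝ) (h : ℝ) : Convex ℝ (trap A B h) := by
  rintro p ⟨h1, h2, h3, h4⟩ q ⟨k1, k2, k3, k4⟩ u t hu ht hut
  obtain rfl : u = 1 - t := by linarith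
  refine ⟨?_, ?_, ?_, ?_⟩ <;> simp
  · nlinarith
  · nlinarith
  · nlinarith
  · nlinarith [mul_le_mul_of_nonneg_left h4 hu, mul_le_mul_of_nonneg_left k4 ht]

theorem seg_cross {A B t : ℝ × ℝ} (ht : t ∈ segment ℝ A B) :
    (B.2 - A.2) * (t.1 - A.1) = (t.2 - A.2) * (B.1 - A.1) := by
  obtain ⟨u, s, hu, hs, hus, rfl⟩ := ht
  obtain rfl : u = 1 - s := by linarith
  simp; ring

theorem seg_fst {A B t : ℝ × ℝ} (hAB : A.1 ≤ B.1) (ht : t ∈ segment ℝ A B) :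
    A.1 ≤ t.1 ∧ t.1 ≤ B.1 := by
  obtain ⟨u, s, hu, hs, hus, rfl⟩ := ht
  obtain rfl : u = 1 - s := by linarith
  simp
  constructor <;> nlinarith

theorem exists_step (n : ℕ) (f : ℕ → ℝ) (x : ℝ) (hx0 : f 0 ≤ x) :
    x ≤ f (n + 1) → ∃ i ≤ n, f i ≤ x ∧ x ≤ f (i + 1) := by
  induction n with
  | zero => intro h; exact ⟨0, le_refl _, hx0, h⟩
  | succ n ih =>
    intro h
    rcases le_total x (f (n + 1)) with h1 | h1
    · obtain ⟨i, hi, h2⟩ := ih h1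
      exact ⟨i, by omega, h2⟩
    · exact ⟨n + 1, le_refl _, h1, h⟩

theorem uniPoly_eq (n : ℕ) (hn : 2 ≤ n) (v : Fin n → ℝ × ℝ)
    (hmono : ∀ i j : Fin n, i < j → (v i).1 < (v j).1) (h : ℝ) :
    uniPoly n hn v h = ⋃ i : Fin (n - 1),
      trap (v (Fin.castLE (by omega) i)) (v (Fin.cast (by omega) i.succ)) h := by
  have hmono' : ∀ i j : Fin n, i ≤ j → (v i).1 ≤ (v j).1 := by
    intro i j hij
    rcases hij.lt_or_eq with h1 | rfl
    · exact (hmono i j h1).le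
    · exact le_refl _
  ext p
  simp only [Set.mem_iUnion]
  constructor
  · rintro ⟨h1, h2, h3, h4⟩
    set f : ℕ → ℝ := fun i => if hi : i < n then (v ⟨i, hi⟩).1 else 0 with hf
    obtain ⟨i, hi, hi1, hi2⟩ := exists_step (n - 2) f p.1 (by
      simp only [hf]; rw [dif_pos (by omega)]; exact h1) (by
      have : n - 2 + 1 = n - 1 := by omega
      simp only [hf, this]; rw [dif_pos (by omega)]; exact h2)
    simp only [hf] at hi1 hi2
    rw [dif_pos (by omega)] at hi1 hi2
    refine ⟨⟨i, by omega⟩, hi1, hi2, h3, ?_⟩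
    have hlt : (v (Fin.castLE (by omega) (⟨i, by omega⟩ : Fin (n - 1)))).1
      < (v (Fin.cast (by omega) (⟨i, by omega⟩ : Fin (n - 1)).succ)).1 := hmono _ _ (by
        simp [Fin.lt_def])
    change (v (Fin.castLE (by omega) (⟨i, by omega⟩ : Fin (n - 1)))).1 ≤ p.1 at hi1
    change p.1 ≤ (v (Fin.cast (by omega) (⟨i, by omega⟩ : Fin (n - 1)).succ)).1 at hi2
    have hsub : segment ℝ (v (Fin.castLE (by omega) (⟨i, by omega⟩ : Fin (n - 1))))
      (v (Fin.cast (by omega) (⟨i, by omega⟩ : Fin (n - 1)).succ)) ⊆ lowerChain n hn v :=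
      Set.subset_iUnion (fun i : Fin (n - 1) => segment ℝ (v (Fin.castLE (by omega) i))
        (v (Fin.cast (by omega) i.succ))) _
    generalize v (Fin.castLE (by omega) (⟨i, by omega⟩ : Fin (n - 1))) = A at *
    generalize v (Fin.cast (by omega) (⟨i, by omega⟩ : Fin (n - 1)).succ) = B at *
    have hd : 0 < B.1 - A.1 := by linarith
    set s := (p.1 - A.1) / (B.1 - A.1) with hs
    have hs1 : s * (B.1 - A.1) = p.1 - A.1 := by rw [hs]; field_simp
    have := h4 ((1 - s) • A + s • B) (hsub ⟨1 - s, s, by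
      rw [sub_nonneg, hs, div_le_one hd]; linarith, by
      apply div_nonneg <;> linarith, by ring, rfl⟩) (by
      simp; linarith)
    simp at this
    rw [← hs1]
    nlinarith [mul_le_mul_of_nonneg_right this hd.le]
  · rintro ⟨i, h1, h2, h3, h4⟩
    refine ⟨(hmono' _ _ (by simp [Fin.le_def])).trans h1,
      h2.trans (hmono' _ _ (by simp [Fin.le_def])), h3, ?_⟩
    intro t ht htp
    simp only [lowerChain, Set.mem_iUnion] at ht
    obtain ⟨j, hj⟩ := ht
    have hlt : ∀ i : Fin (n - 1), (v (Fin.castLE (by omega) i)).1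
      < (v (Fin.cast (by omega) i.succ)).1 := fun i => hmono _ _ (by simp [Fin.lt_def])
    have hi' := hlt i
    have hj' := hlt j
    have hcr := seg_cross hj
    obtain ⟨hf1, hf2⟩ := seg_fst hj'.le hj
    rw [htp] at hf1 hf2 hcr
    rcases lt_trichotomy i j with hij | rfl | hij
    · have hle : (Fin.cast (by omega) i.succ : Fin n) ≤ Fin.castLE (by omega) j := by
        simp [Fin.le_def]; omega
      rcases hle.lt_or_eq with h5 | h5
      · have := hmono _ _ h5
        linarith
      · rw [h5] at h2 h4 hi'
        have he : p.1 = (v (Fin.castLE (by omega) j)).1 := le_antisymm h2 hf1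
        rw [he] at h4 hcr
        have e1 := le_of_mul_le_mul_right h4 (sub_pos.mpr hi')
        rw [sub_self, mul_zero] at hcr
        have e2 := (mul_eq_zero.mp hcr.symm).resolve_right (sub_pos.mpr hj').ne'
        linarith
    · have e1 := le_of_mul_le_mul_right (hcr.symm.le.trans h4) (sub_pos.mpr hi')
      linarith
    · have hle : (Fin.cast (by omega) j.succ : Fin n) ≤ Fin.castLE (by omega) i := by
        simp [Fin.le_def]; omega
      rcases hle.lt_or_eq with h5 | h5
      · have := hmono _ _ h5
        linarith
      · rw [h5] at hf2 hcr hj'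
        have he : p.1 = (v (Fin.castLE (by omega) i)).1 := le_antisymm hf2 h1
        rw [he] at h4 hcr
        have e1 := mul_right_cancel₀ (sub_pos.mpr hj').ne' hcr
        rw [sub_self, mul_zero] at h4
        have e2 := nonneg_of_mul_nonneg_left h4 (sub_pos.mpr hi')
        linarith

theorem stmt_13 (n : ℕ) (hn : 2 ≤ n) (v : Fin n → ℝ × ℝ)
    (hmono : ∀ i j : Fin n, i < j → (v i).1 < (v j).1)
    (h : ℝ) (h0 : (v ⟨0, by omega⟩).2 = h) (hlast : (v ⟨n - 1, by omega⟩).2 = h)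
    (hbelow : ∀ i : Fin n, (v i).2 ≤ h) :
    ∃ m : ℕ,
      IsLeast {k : ℕ | ∃ G : Set (ℝ × ℝ), G.Finite ∧ G ⊆ uniPoly n hn v h ∧
        uniPoly n hn v h ⊆ (⋃ g ∈ G, visIn (uniPoly n hn v h) g) ∧ G.ncard = k} m ∧
      IsGreatest {k : ℕ | ∃ W : Set (ℝ × ℝ), W.Finite ∧ W ⊆ uniPoly n hn v h ∧
        (∀ w ∈ W, ∀ w' ∈ W, w ≠ w' →
          visIn (uniPoly n hn v h) w ∩ visIn (uniPoly n hn v h) w' = ∅) ∧ W.ncard = k} m := by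
  have heq := uniPoly_eq n hn v hmono h
  have hlt : ∀ i : Fin (n - 1), (v (Fin.castLE (by omega) i)).1
      < (v (Fin.cast (by omega) i.succ)).1 := fun i => hmono _ _ (by simp [Fin.lt_def])
  have hcorner : ∀ i : Fin (n - 1), ((v (Fin.castLE (by omega) i)).1, h) ∈
      trap (v (Fin.castLE (by omega) i)) (v (Fin.cast (by omega) i.succ)) h := by
    intro i
    refine ⟨le_refl _, (hlt i).le, le_refl _, ?_⟩
    have h1 := hlt i
    have h2 := hbelow (Fin.castLE (by omega) i)
    simp only [sub_self, mul_zero]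
    apply mul_nonneg <;> linarith
  have hsubP : ∀ i : Fin (n - 1),
      trap (v (Fin.castLE (by omega) i)) (v (Fin.cast (by omega) i.succ)) h ⊆
        uniPoly n hn v h := by
    intro i
    rw [heq]
    exact Set.subset_iUnion (fun i : Fin (n - 1) =>
      trap (v (Fin.castLE (by omega) i)) (v (Fin.cast (by omega) i.succ)) h) i
  refine abstract_perfect (uniPoly n hn v h) (v ⟨0, by omega⟩).1 (v ⟨n - 1, by omega⟩).1 h
    ?_ (fun p hp => hp.2.2.1) (fun p hp => hp.1) (fun p hp => hp.2.1) ?_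
    (Set.range fun i : Fin (n - 1) => ((v (Fin.castLE (by omega) i)).1, h))
    (Set.finite_range _) ?_ ?_
  · rintro x y y' ⟨h1, h2, h3, h4⟩ hy hy'
    exact ⟨h1, h2, hy', fun t ht htx => (h4 t ht htx).trans hy⟩
  · rw [heq]
    exact isClosed_iUnion_of_finite fun i => trap_closed _ _ _
  · rintro _ ⟨i, rfl⟩
    exact hsubP i (hcorner i)
  · intro q hq
    have hq' := hq
    rw [heq] at hq'
    obtain ⟨i, hi⟩ := Set.mem_iUnion.mp hq'
    exact Set.mem_biUnion ⟨i, rfl⟩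
      ⟨hq, ((trap_convex _ _ _).segment_subset (hcorner i) hi).trans (hsubP i)⟩
end

section
/- (Monotone mountains are perfect) For every monotone mountain P, the minimum cardinality of a guard cover equals the maximum cardinality of a witness set: there exists m ∈ ℕ such that m is the least element of {k : ∃ finite guard cover G ⊆ P with Set.ncard G = k} and m is the greatest element of {k : ∃ finite witness set W ⊆ P with Set.ncard W = k}. -/
open Set

/-- The monotone mountain determined by the lower chain and the affine top function `ℓ`. -/
def monoMountain (n : ℕ) (hn : 2 ≤ n) (v : Fin n → ℝ × ℝ) (ℓ : ℝ → ℝ) : Set (ℝ × ℝ) :=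
  {p : ℝ × ℝ | (v ⟨0, by omega⟩).1 ≤ p.1 ∧ p.1 ≤ (v ⟨n - 1, by omega⟩).1 ∧ p.2 ≤ ℓ p.1 ∧
    ∀ t ∈ lowerChain n hn v, t.1 = p.1 → t.2 ≤ p.2}

/-- Greedy duality for closed intervals. -/
theorem greedy_duality {ι : Type*} (L R : ι → ℝ) (hLR : ∀ q, L q ≤ R q) (N : ℕ) :
    ∀ (S : Set ι) (F : Finset ℝ), F.card ≤ N → (∀ q ∈ S, ∃ f ∈ F, L q ≤ f ∧ f ≤ R q) →
      ∃ (X : Finset ℝ) (W : Finset ι), (↑W : Set ι) ⊆ S ∧ X.card ≤ W.card ∧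
        (∀ q ∈ S, ∃ f ∈ X, L q ≤ f ∧ f ≤ R q) ∧
        (∀ w ∈ W, ∀ w' ∈ W, w ≠ w' → R w < L w' ∨ R w' < L w) := by
  classical
  induction N with
  | zero =>
    intro S F hF hp
    refine ⟨∅, ∅, by simp, by simp, ?_, by simp⟩
    intro q hq
    obtain ⟨f, hf, _⟩ := hp q hq
    have : F = ∅ := Finset.card_eq_zero.mp (by omega)
    simp [this] at hf
  | succ N ih =>
    intro S F hF hp
    rcases S.eq_empty_or_nonempty with rfl | hS
    · exact ⟨∅, ∅, by simp, by simp, by simp, by simp⟩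
    have hFne : F.Nonempty := by
      obtain ⟨q, hq⟩ := hS
      obtain ⟨f, hf, _⟩ := hp q hq
      exact ⟨f, hf⟩
    set x := sInf (R '' S) with hx
    have hlow : ∀ q ∈ S, F.min' hFne ≤ R q := by
      intro q hq
      obtain ⟨f, hf, _, h2⟩ := hp q hq
      exact (F.min'_le f hf).trans h2
    have hbdd : BddBelow (R '' S) := ⟨F.min' hFne, by rintro _ ⟨q, hq, rfl⟩; exact hlow q hq⟩
    have hxR : ∀ q ∈ S, x ≤ R q := fun q hq => csInf_le hbdd ⟨q, hq, rfl⟩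
    have hmin : F.min' hFne ≤ x :=
      le_csInf (hS.image R) (by rintro _ ⟨q, hq, rfl⟩; exact hlow q hq)
    obtain ⟨X, W, hWS, hc, hX, hW⟩ := ih {q | q ∈ S ∧ x < L q} (F.erase (F.min' hFne))
      (by rw [Finset.card_erase_of_mem (F.min'_mem hFne)]; omega)
      (by
        rintro q ⟨hq, hq2⟩
        obtain ⟨f, hf, h1, h2⟩ := hp q hq
        refine ⟨f, Finset.mem_erase.mpr ⟨?_, hf⟩, h1, h2⟩
        intro h
        rw [← h] at hmin
        linarith)
    have hex : ∃ q ∈ S, ∀ w ∈ W, R q < L w := by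
      rcases W.eq_empty_or_nonempty with rfl | hne
      · obtain ⟨q, hq⟩ := hS
        exact ⟨q, hq, by simp⟩
      · obtain ⟨w0, hw0, hmn⟩ := W.exists_min_image L hne
        have : sInf (R '' S) < L w0 := (hWS hw0).2
        obtain ⟨_, ⟨q, hq, rfl⟩, hlt⟩ := exists_lt_of_csInf_lt (hS.image R) this
        exact ⟨q, hq, fun w hw => hlt.trans_le (hmn w hw)⟩
    obtain ⟨q, hq, hqW⟩ := hex
    have hqn : q ∉ W := fun h => absurd (hqW q h) (not_lt.mpr (hLR q))
    refine ⟨insert x X, insert q W, ?_, ?_, ?_, ?_⟩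
    · intro z hz
      rcases Finset.mem_insert.mp (Finset.mem_coe.mp hz) with rfl | h
      · exact hq
      · exact (hWS h).1
    · rw [Finset.card_insert_of_notMem hqn]
      exact (Finset.card_insert_le _ _).trans (by omega)
    · intro z hz
      by_cases h : L z ≤ x
      · exact ⟨x, by simp, h, hxR z hz⟩
      · obtain ⟨f, hf, h'⟩ := hX z ⟨hz, not_le.mp h⟩
        exact ⟨f, by simp [hf], h'⟩
    · intro w hw w' hw' hne
      rcases Finset.mem_insert.mp hw with rfl | h
      · rcases Finset.mem_insert.mp hw' with rfl | h'
        · exact absurd rfl hne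
        · exact Or.inl (hqW _ h')
      · rcases Finset.mem_insert.mp hw' with rfl | h'
        · exact Or.inr (hqW _ h)
        · exact hW w h w' h' hne

/-- The segment from `q` to the top point over `x`, in coordinates. -/
theorem seg_top_iff (P : Set (ℝ × ℝ)) (p q : ℝ × ℝ) :
    segment ℝ p q ⊆ P ↔ ∀ t : ℝ, 0 ≤ t → t ≤ 1 →
      ((1 - t) * p.1 + t * q.1, (1 - t) * p.2 + t * q.2) ∈ P := by
  constructor
  · intro h t h0 h1
    apply h
    exact ⟨1 - t, t, by linarith, h0, by ring, by ext <;> simp⟩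
  · rintro h _ ⟨s, t, hs, ht, hst, rfl⟩
    have := h t ht (by linarith)
    have e : s = 1 - t := by linarith
    subst e
    have e2 : (1 - t) • p + t • q = ((1 - t) * p.1 + t * q.1, (1 - t) * p.2 + t * q.2) := by
      ext <;> simp
    rw [e2]
    exact this

theorem mountain_abstract (P : Set (ℝ × ℝ)) (a b lo hi : ℝ)
    (hup : ∀ p z : ℝ × ℝ, p ∈ P → z.1 = p.1 → p.2 ≤ z.2 → z.2 ≤ a * z.1 + b → z ∈ P)
    (hle : ∀ p ∈ P, p.2 ≤ a * p.1 + b)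
    (hbd : ∀ p ∈ P, lo ≤ p.1 ∧ p.1 ≤ hi)
    (hcl : IsClosed P)
    (hfin : ∃ F : Finset ℝ, ∀ q ∈ P, ∃ x ∈ F, segment ℝ q (x, a * x + b) ⊆ P) :
    ∃ m : ℕ,
      IsLeast {k : ℕ | ∃ G : Set (ℝ × ℝ), G.Finite ∧ G ⊆ P ∧
        P ⊆ (⋃ g ∈ G, visIn P g) ∧ G.ncard = k} m ∧
      IsGreatest {k : ℕ | ∃ W : Set (ℝ × ℝ), W.Finite ∧ W ⊆ P ∧
        (∀ w ∈ W, ∀ w' ∈ W, w ≠ w' → visIn P w ∩ visIn P w' = ∅) ∧ W.ncard = k} m := by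
  classical
  -- weak duality
  have weak : ∀ G W : Set (ℝ × ℝ), G.Finite → G ⊆ P → P ⊆ (⋃ g ∈ G, visIn P g) → W ⊆ P →
      (∀ w ∈ W, ∀ w' ∈ W, w ≠ w' → visIn P w ∩ visIn P w' = ∅) → W.ncard ≤ G.ncard := by
    intro G W hGf hGP hcov hWP hdis
    have hch : ∀ w, ∃ g, w ∈ W → g ∈ G ∧ segment ℝ g w ⊆ P := by
      intro w
      by_cases hw : w ∈ W
      · have := hcov (hWP hw)
        simp only [mem_iUnion] at this
        obtain ⟨g, hg, hv⟩ := this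
        exact ⟨g, fun _ => ⟨hg, hv.2⟩⟩
      · exact ⟨w, fun h => absurd h hw⟩
    choose g hg using hch
    refine Set.ncard_le_ncard_of_injOn g (fun w hw => (hg w hw).1) ?_ hGf
    intro w hw w' hw' heq
    by_contra hne
    have h1 : g w ∈ visIn P w ∩ visIn P w' := by
      refine ⟨⟨hGP (hg w hw).1, ?_⟩, ⟨hGP (hg w hw).1, ?_⟩⟩
      · unfold seesIn; rw [segment_symm]; exact (hg w hw).2
      · unfold seesIn; rw [segment_symm, heq]; exact (hg w' hw').2
    rw [hdis w hw w' hw' hne] at h1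
    exact h1
  let I : ℝ × ℝ → Set ℝ := fun q => {x | segment ℝ q (x, a * x + b) ⊆ P}
  have hIself : ∀ q ∈ P, q.1 ∈ I q := by
    intro q hq
    show segment ℝ _ _ ⊆ P
    rw [seg_top_iff]
    intro t h0 h1
    have := hle q hq
    exact hup q _ hq (by simp only; ring) (by simp only; nlinarith) (by simp only; nlinarith)
  have hIP : ∀ q x, x ∈ I q → (x, a * x + b) ∈ P := fun q x h => h (right_mem_segment ℝ _ _)
  have hIstar : ∀ q ∈ P, ∀ x ∈ I q, ∀ s : ℝ, 0 ≤ s → s ≤ 1 → (1 - s) * q.1 + s * x ∈ I q := by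
    intro q hq x hx s hs0 hs1
    have hx' : segment ℝ _ _ ⊆ P := hx
    show segment ℝ _ _ ⊆ P
    rw [seg_top_iff] at hx' ⊢
    intro t h0 h1
    have := hle q hq
    refine hup _ _ (hx' (t * s) (by positivity) (by nlinarith)) (by simp only; ring) ?_ ?_
    · simp only
      nlinarith [mul_nonneg (mul_nonneg h0 (sub_nonneg.mpr hs1)) (sub_nonneg.mpr this)]
    · simp only
      nlinarith [mul_nonneg (sub_nonneg.mpr h1) (sub_nonneg.mpr this)]
  have hIbtw : ∀ q ∈ P, ∀ x ∈ I q, ∀ y, (q.1 ≤ y ∧ y ≤ x ∨ x ≤ y ∧ y ≤ q.1) → y ∈ I q := by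
    intro q hq x hx y hy
    by_cases hxq : x = q.1
    · have : y = x := by rcases hy with h | h <;> linarith
      rwa [this]
    have hne : x - q.1 ≠ 0 := sub_ne_zero.mpr hxq
    have e : (1 - (y - q.1) / (x - q.1)) * q.1 + (y - q.1) / (x - q.1) * x = y := by
      field_simp; ring
    rw [← e]
    apply hIstar q hq x hx
    · rcases hy with h | h
      · exact div_nonneg (by linarith) (by linarith)
      · exact div_nonneg_of_nonpos (by linarith) (by linarith)
    · rcases hy with h | h
      · rw [div_le_one (lt_of_le_of_ne (by linarith) hne.symm)]; linarith
      · rw [div_le_one_of_neg (lt_of_le_of_ne (by linarith) hne)]; linarith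
  have hIoc : ∀ q ∈ P, (I q).OrdConnected := by
    intro q hq
    refine ⟨fun x hx y hy z hz => ?_⟩
    rcases le_total q.1 z with h | h
    · exact hIbtw q hq y hy z (Or.inl ⟨h, hz.2⟩)
    · exact hIbtw q hq x hx z (Or.inr ⟨hz.1, h⟩)
  have hIcl : ∀ q, IsClosed (I q) := by
    intro q
    have : I q = ⋂ (t : ℝ) (_ : 0 ≤ t) (_ : t ≤ 1),
        (fun x : ℝ => ((1 - t) * q.1 + t * x, (1 - t) * q.2 + t * (a * x + b))) ⁻¹' P := by
      ext x
      simp only [mem_iInter, mem_preimage]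
      exact seg_top_iff P q _
    rw [this]
    refine isClosed_iInter fun t => isClosed_iInter fun _ => isClosed_iInter fun _ => ?_
    exact hcl.preimage (by fun_prop)
  have hIcpt : ∀ q, IsCompact (I q) := fun q =>
    isCompact_Icc.of_isClosed_subset (hIcl q) (fun x hx => hbd _ (hIP q x hx))
  have hIIcc : ∀ q ∈ P, I q = Icc (sInf (I q)) (sSup (I q)) := fun q hq =>
    eq_Icc_of_connected_compact ⟨⟨_, hIself q hq⟩, (hIoc q hq).isPreconnected⟩ (hIcpt q)
  obtain ⟨F, hF⟩ := hfin
  obtain ⟨X, W, -, hc, hX, hW⟩ := greedy_duality (ι := P) (fun q => sInf (I q.1))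
    (fun q => sSup (I q.1))
    (fun q => by
      have := hIself q.1 q.2
      rw [hIIcc q.1 q.2] at this
      exact this.1.trans this.2) F.card univ F le_rfl (by
      intro q _
      obtain ⟨x, hx, h⟩ := hF q.1 q.2
      have h' : x ∈ I q.1 := h
      rw [hIIcc q.1 q.2] at h'
      exact ⟨x, hx, h'.1, h'.2⟩)
  let G : Set (ℝ × ℝ) := ((fun x : ℝ => (x, a * x + b)) '' (X : Set ℝ)) ∩ P
  have hGf : G.Finite := ((Finset.finite_toSet X).image _).inter_of_left _
  have hGP : G ⊆ P := inter_subset_right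
  have hGcov : P ⊆ (⋃ g ∈ G, visIn P g) := by
    intro q hq
    obtain ⟨x, hx, h1, h2⟩ := hX ⟨q, hq⟩ (mem_univ _)
    have hxI : x ∈ I q := by rw [hIIcc q hq]; exact ⟨h1, h2⟩
    simp only [mem_iUnion]
    refine ⟨(x, a * x + b), ⟨⟨x, hx, rfl⟩, hIP q x hxI⟩, hq, ?_⟩
    unfold seesIn
    rw [segment_symm]
    exact hxI
  have hGc : G.ncard ≤ X.card := by
    refine (Set.ncard_le_ncard inter_subset_left ((Finset.finite_toSet X).image _)).trans ?_
    refine (Set.ncard_image_le (Finset.finite_toSet X)).trans ?_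
    rw [Set.ncard_coe_finset]
  let W' : Set (ℝ × ℝ) := Subtype.val '' (W : Set P)
  have hWf : W'.Finite := (Finset.finite_toSet W).image _
  have hWP : W' ⊆ P := by rintro _ ⟨w, _, rfl⟩; exact w.2
  have hWc : W'.ncard = W.card := by
    rw [Set.ncard_image_of_injective _ Subtype.val_injective, Set.ncard_coe_finset]
  have hproj : ∀ w z, z ∈ visIn P w → w ∈ P → z.1 ∈ I w := by
    rintro w z ⟨hz, hs⟩ hw
    have hs' : segment ℝ w z ⊆ P := hs
    show segment ℝ _ _ ⊆ P
    rw [seg_top_iff] at hs' ⊢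
    intro t h0 h1
    have h2 := hle w hw
    have h3 := hle z hz
    refine hup _ _ (hs' t h0 h1) rfl ?_ ?_
    · simp only
      nlinarith [mul_nonneg h0 (sub_nonneg.mpr h3)]
    · simp only
      nlinarith [mul_nonneg (sub_nonneg.mpr h1) (sub_nonneg.mpr h2)]
  have hWd : ∀ w ∈ W', ∀ w' ∈ W', w ≠ w' → visIn P w ∩ visIn P w' = ∅ := by
    rintro _ ⟨w, hw, rfl⟩ _ ⟨w', hw', rfl⟩ hne
    rw [Set.eq_empty_iff_forall_notMem]
    rintro z ⟨h1, h2⟩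
    have k1 := hproj _ _ h1 w.2
    have k2 := hproj _ _ h2 w'.2
    rw [hIIcc w.1 w.2] at k1
    rw [hIIcc w'.1 w'.2] at k2
    rcases hW w hw w' hw' (fun h => hne (by rw [h])) with h | h
    · exact absurd (k2.1.trans k1.2) (not_le.mpr h)
    · exact absurd (k1.1.trans k2.2) (not_le.mpr h)
  have hGW : G.ncard = W'.ncard :=
    le_antisymm (by omega) (weak G W' hGf hGP hGcov hWP hWd)
  refine ⟨G.ncard, ⟨⟨G, hGf, hGP, hGcov, rfl⟩, ?_⟩, ⟨⟨W', hWf, hWP, hWd, hGW.symm⟩, ?_⟩⟩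
  · rintro k ⟨G', hf', hP', hc', rfl⟩
    rw [hGW]
    exact weak G' W' hf' hP' hc' hWP hWd
  · rintro k ⟨W'', hf', hP', hd', rfl⟩
    exact weak G W'' hGf hGP hGcov hP' hd'

/-- The trapezoid between the edge `[A,B]` and the line `y = a x + b`. -/
def trapz (A B : ℝ × ℝ) (a b : ℝ) : Set (ℝ × ℝ) :=
  {p | A.1 ≤ p.1 ∧ p.1 ≤ B.1 ∧ p.2 ≤ a * p.1 + b ∧
    (B.2 - A.2) * (p.1 - A.1) ≤ (B.1 - A.1) * (p.2 - A.2)}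

theorem trapz_closed (A B : ℝ × ℝ) (a b : ℝ) : IsClosed (trapz A B a b) := by
  have h1 : IsClosed {p : ℝ × ℝ | A.1 ≤ p.1} := isClosed_le (by fun_prop) (by fun_prop)
  have h2 : IsClosed {p : ℝ × ℝ | p.1 ≤ B.1} := isClosed_le (by fun_prop) (by fun_prop)
  have h3 : IsClosed {p : ℝ × ℝ | p.2 ≤ a * p.1 + b} := isClosed_le (by fun_prop) (by fun_prop)
  have h4 : IsClosed {p : ℝ × ℝ | (B.2 - A.2) * (p.1 - A.1) ≤ (B.1 - A.1) * (p.2 - A.2)} :=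
    isClosed_le (by fun_prop) (by fun_prop)
  exact h1.inter (h2.inter (h3.inter h4))

theorem trapz_seg (A B : ℝ × ℝ) (a b : ℝ) (p q : ℝ × ℝ) (hp : p ∈ trapz A B a b)
    (hq : q ∈ trapz A B a b) : segment ℝ p q ⊆ trapz A B a b := by
  rw [seg_top_iff]
  intro t h0 h1
  obtain ⟨p1, p2, p3, p4⟩ := hp
  obtain ⟨q1, q2, q3, q4⟩ := hq
  have h1' := sub_nonneg.mpr h1
  have m := fun {u w u' w' : ℝ} (h : u ≤ w) (h' : u' ≤ w') =>
    add_le_add (mul_le_mul_of_nonneg_left h h1') (mul_le_mul_of_nonneg_left h' h0)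
  refine ⟨?_, ?_, ?_, ?_⟩
  · have := m p1 q1; simp only; linarith
  · have := m p2 q2; simp only; linarith
  · have := m p3 q3; simp only; linarith
  · have := m p4 q4; simp only; linarith

theorem stmt_14 (n : ℕ) (hn : 2 ≤ n) (v : Fin n → ℝ × ℝ)
    (hmono : ∀ i j : Fin n, i < j → (v i).1 < (v j).1)
    (ℓ : ℝ → ℝ) (haff : ∃ a b : ℝ, ∀ x : ℝ, ℓ x = a * x + b)
    (hℓ0 : ℓ (v ⟨0, by omega⟩).1 = (v ⟨0, by omega⟩).2)
    (hℓlast : ℓ (v ⟨n - 1, by omega⟩).1 = (v ⟨n - 1, by omega⟩).2)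
    (hbelow : ∀ i : Fin n, (v i).2 ≤ ℓ (v i).1) :
    ∃ m : ℕ,
      IsLeast {k : ℕ | ∃ G : Set (ℝ × ℝ), G.Finite ∧ G ⊆ monoMountain n hn v ℓ ∧
        monoMountain n hn v ℓ ⊆ (⋃ g ∈ G, visIn (monoMountain n hn v ℓ) g) ∧ G.ncard = k} m ∧
      IsGreatest {k : ℕ | ∃ W : Set (ℝ × ℝ), W.Finite ∧ W ⊆ monoMountain n hn v ℓ ∧
        (∀ w ∈ W, ∀ w' ∈ W, w ≠ w' →
          visIn (monoMountain n hn v ℓ) w ∩ visIn (monoMountain n hn v ℓ) w' = ∅) ∧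
        W.ncard = k} m := by
  classical
  obtain ⟨a, b, hab⟩ := haff
  have hmono' : ∀ i j : Fin n, i ≤ j → (v i).1 ≤ (v j).1 := by
    intro i j h
    rcases h.eq_or_lt with rfl | h
    · exact le_rfl
    · exact (hmono i j h).le
  let A : Fin (n - 1) → ℝ × ℝ := fun i => v (Fin.castLE (by omega) i)
  let B : Fin (n - 1) → ℝ × ℝ := fun i => v (Fin.cast (by omega) i.succ)
  have hAB : ∀ i, (A i).1 < (B i).1 := fun i => hmono _ _ (by simp [Fin.lt_def])
  have hBA : ∀ i j : Fin (n - 1), i < j → (B i).1 < (A j).1 ∨ B i = A j := by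
    intro i j h
    have h' : (i : ℕ) < j := h
    rcases Nat.lt_or_ge (i + 1) j with h2 | h2
    · exact Or.inl (hmono _ _ (by simp [Fin.lt_def]; omega))
    · right
      show v _ = v _
      congr 1
      apply Fin.ext
      simp; omega
  have hseg : ∀ i t, t ∈ segment ℝ (A i) (B i) → (A i).1 ≤ t.1 ∧ t.1 ≤ (B i).1 ∧
      (B i).1 * t.2 - (A i).1 * t.2 =
        (B i).2 * (t.1 - (A i).1) + (A i).2 * ((B i).1 - t.1) := by
    rintro i _ ⟨s, t, hs, ht, hst, rfl⟩
    have e : s = 1 - t := by linarith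
    subst e
    have := hAB i
    refine ⟨?_, ?_, ?_⟩
    · simp; nlinarith
    · simp; nlinarith
    · simp; ring
  have hLC : ∀ t, t ∈ lowerChain n hn v ↔ ∃ i, t ∈ segment ℝ (A i) (B i) := by
    intro t; unfold lowerChain; rw [mem_iUnion]
  have hPT : monoMountain n hn v ℓ = ⋃ i, trapz (A i) (B i) a b := by
    ext p
    rw [mem_iUnion]
    constructor
    · rintro ⟨h1, h2, h3, h4⟩
      -- find the edge over which `p` lies
      have hfind : ∃ i, (A i).1 ≤ p.1 ∧ p.1 ≤ (B i).1 := by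
        have hex : ∃ k : ℕ, ∃ h : k < n - 1, p.1 ≤ (B ⟨k, h⟩).1 :=
          ⟨n - 2, by omega, h2.trans (hmono' _ _ (by simp [Fin.le_def]; omega))⟩
        obtain ⟨hk, hk2⟩ := Nat.find_spec hex
        refine ⟨⟨Nat.find hex, hk⟩, ?_, hk2⟩
        rcases Nat.eq_zero_or_pos (Nat.find hex) with h0 | h0
        · refine le_trans (hmono' _ _ ?_) h1
          simp [Fin.le_def, h0]
        · have := Nat.find_min hex (m := Nat.find hex - 1) (by omega)
          push Not at this
          refine le_trans (hmono' _ _ ?_) (this (by omega)).le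
          show Nat.find hex ≤ Nat.find hex - 1 + 1
          omega
      obtain ⟨i, hi1, hi2⟩ := hfind
      refine ⟨i, hi1, hi2, by rw [← hab]; exact h3, ?_⟩
      have hd : 0 < (B i).1 - (A i).1 := sub_pos.mpr (hAB i)
      set s := (p.1 - (A i).1) / ((B i).1 - (A i).1) with hs
      have hsm : s * ((B i).1 - (A i).1) = p.1 - (A i).1 := by rw [hs]; field_simp
      have hs0 : 0 ≤ s := div_nonneg (by linarith) hd.le
      have hs1 : s ≤ 1 := by rw [hs, div_le_one hd]; linarith
      have := h4 ((1 - s) • A i + s • B i)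
        ((hLC _).mpr ⟨i, 1 - s, s, by linarith, hs0, by ring, rfl⟩) (by simp; linarith)
      simp at this
      rw [← hsm]
      nlinarith [mul_le_mul_of_nonneg_left this hd.le]
    · rintro ⟨i, h1, h2, h3, h4⟩
      refine ⟨le_trans (hmono' _ _ (by simp [Fin.le_def])) h1,
        h2.trans (hmono' _ _ (by simp [Fin.le_def] <;> omega)), by rw [hab]; exact h3, ?_⟩
      intro t ht htp
      obtain ⟨j, hj⟩ := (hLC t).mp ht
      obtain ⟨t1, t2, t3⟩ := hseg j t hj
      have di := hAB i
      have dj := hAB j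
      rcases lt_trichotomy i j with h | h | h
      · rcases hBA i j h with h' | h'
        · linarith
        · have e1 : t.1 = (A j).1 := by rw [h'] at h2; linarith
          have e2 : t.2 = (A j).2 := by
            rw [e1] at t3
            have : ((B j).1 - (A j).1) * (t.2 - (A j).2) = 0 := by linarith
            rcases mul_eq_zero.mp this with h | h <;> linarith
          rw [← htp, e1, h'] at h4
          rw [h'] at di
          rw [e2]
          nlinarith
      · subst h
        rw [← htp] at h4
        nlinarith
      · rcases hBA j i h with h' | h'
        · linarith
        · have e1 : t.1 = (B j).1 := by rw [← h'] at h1; linarith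
          have e2 : t.2 = (B j).2 := by
            rw [e1] at t3
            have : ((B j).1 - (A j).1) * (t.2 - (B j).2) = 0 := by linarith
            rcases mul_eq_zero.mp this with h | h <;> linarith
          rw [← htp, e1, h'] at h4
          rw [e2, h']
          nlinarith
  refine mountain_abstract (monoMountain n hn v ℓ) a b (v ⟨0, by omega⟩).1
    (v ⟨n - 1, by omega⟩).1 ?_ ?_ ?_ ?_ ?_
  · rintro p z ⟨h1, h2, h3, h4⟩ e h5 h6
    refine ⟨by rw [e]; exact h1, by rw [e]; exact h2, by rw [hab]; exact h6, ?_⟩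
    intro t ht hte
    exact (h4 t ht (by rw [hte, e])).trans h5
  · rintro p ⟨h1, h2, h3, h4⟩
    rw [← hab]; exact h3
  · rintro p ⟨h1, h2, h3, h4⟩
    exact ⟨h1, h2⟩
  · rw [hPT]
    exact isClosed_iUnion_of_finite fun i => trapz_closed _ _ _ _
  · refine ⟨Finset.univ.image fun i => (A i).1, ?_⟩
    intro q hq
    rw [hPT] at hq ⊢
    obtain ⟨i, hi⟩ := mem_iUnion.mp hq
    refine ⟨(A i).1, Finset.mem_image_of_mem _ (Finset.mem_univ i), ?_⟩
    refine (trapz_seg _ _ a b _ _ hi ?_).trans (subset_iUnion (fun i => trapz (A i) (B i) a b) i)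
    have hb : (A i).2 ≤ a * (A i).1 + b := by rw [← hab]; exact hbelow _
    have := hAB i
    exact ⟨le_rfl, this.le, le_rfl, by simp only; nlinarith⟩
end

section
/- (Equivalence of AGP on uni-monotone polygons and guarding the lower chain from the top edge) For a uni-monotone polygon P with top edge H and lower chain LC, a set G ⊆ H covers P if and only if it covers LC: for every G ⊆ H, P ⊆ ⋃_{g∈G} V(g) ↔ LC ⊆ ⋃_{g∈G} V(g). -/
open Set

lemma mem_seg_aux (p q a : ℝ × ℝ) (hpq : p.1 < q.1) :
    a ∈ segment ℝ p q ↔ p.1 ≤ a.1 ∧ a.1 ≤ q.1 ∧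
      (a.2 - p.2) * (q.1 - p.1) = (q.2 - p.2) * (a.1 - p.1) := by
  constructor
  · rintro ⟨s, t, hs, ht, hst, rfl⟩
    obtain rfl : s = 1 - t := by linarith
    simp only [Prod.fst_add, Prod.smul_fst, Prod.snd_add, Prod.smul_snd, smul_eq_mul]
    refine ⟨by nlinarith, by nlinarith, by ring⟩
  · rintro ⟨h1, h2, h3⟩
    have hd : 0 < q.1 - p.1 := by linarith
    refine ⟨(q.1 - a.1) / (q.1 - p.1), (a.1 - p.1) / (q.1 - p.1),
      div_nonneg (by linarith) hd.le, div_nonneg (by linarith) hd.le, ?_, ?_⟩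
    · field_simp
      ring
    · ext
      · simp only [Prod.fst_add, Prod.smul_fst, smul_eq_mul]
        field_simp
        ring
      · simp only [Prod.snd_add, Prod.smul_snd, smul_eq_mul]
        field_simp
        linarith

lemma mem_lowerChain_aux (n : ℕ) (hn : 2 ≤ n) (v : Fin n → ℝ × ℝ) (t : ℝ × ℝ) :
    t ∈ lowerChain n hn v ↔ ∃ (i : ℕ) (hi : i + 1 < n),
      t ∈ segment ℝ (v ⟨i, by omega⟩) (v ⟨i + 1, hi⟩) := by
  unfold lowerChain
  rw [mem_iUnion]
  constructor
  · rintro ⟨i, hi⟩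
    exact ⟨i.1, by omega, hi⟩
  · rintro ⟨i, hi, ht⟩
    exact ⟨⟨i, by omega⟩, ht⟩

lemma exists_lowerChain_aux (n : ℕ) (hn : 2 ≤ n) (v : Fin n → ℝ × ℝ)
    (hmono : ∀ i j : Fin n, i < j → (v i).1 < (v j).1) (x : ℝ)
    (hx0 : (v ⟨0, by omega⟩).1 ≤ x) (hx1 : x ≤ (v ⟨n - 1, by omega⟩).1) :
    ∃ t ∈ lowerChain n hn v, t.1 = x := by
  have key : ∀ k : ℕ, ∀ hk : k + 1 < n, x ≤ (v ⟨k + 1, hk⟩).1 →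
      ∃ (i : ℕ) (hi : i + 1 < n), (v ⟨i, by omega⟩).1 ≤ x ∧ x ≤ (v ⟨i + 1, hi⟩).1 := by
    intro k
    induction k with
    | zero => exact fun hk hx => ⟨0, hk, hx0, hx⟩
    | succ k ih =>
      intro hk hx
      rcases le_total x (v ⟨k + 1, by omega⟩).1 with hc | hc
      · exact ih (by omega) hc
      · exact ⟨k + 1, hk, hc, hx⟩
  obtain ⟨m, rfl⟩ : ∃ m, n = m + 2 := ⟨n - 2, by omega⟩
  obtain ⟨i, hi, h1, h2⟩ := key m (by omega) hx1
  have hlt := hmono ⟨i, by omega⟩ ⟨i + 1, hi⟩ (by simp [Fin.lt_def])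
  set p := v ⟨i, by omega⟩
  set q := v ⟨i + 1, hi⟩
  have hd : q.1 - p.1 ≠ 0 := (sub_pos.2 hlt).ne'
  refine ⟨(x, p.2 + (q.2 - p.2) * (x - p.1) / (q.1 - p.1)), ?_, rfl⟩
  rw [mem_lowerChain_aux]
  refine ⟨i, hi, (mem_seg_aux p q _ hlt).2 ⟨h1, h2, ?_⟩⟩
  simp only
  field_simp
  ring

lemma lowerChain_unique_aux (n : ℕ) (hn : 2 ≤ n) (v : Fin n → ℝ × ℝ)
    (hmono : ∀ i j : Fin n, i < j → (v i).1 < (v j).1) (a b : ℝ × ℝ)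
    (ha : a ∈ lowerChain n hn v) (hb : b ∈ lowerChain n hn v) (hab : a.1 = b.1) :
    a.2 = b.2 := by
  rw [mem_lowerChain_aux] at ha hb
  obtain ⟨i, hi, ha⟩ := ha
  obtain ⟨j, hj, hb⟩ := hb
  wlog hij : i ≤ j generalizing a b i j
  · exact (this b a hab.symm j hj hb i hi ha (by omega)).symm
  have hlti := hmono ⟨i, by omega⟩ ⟨i + 1, hi⟩ (by simp [Fin.lt_def])
  have hltj := hmono ⟨j, by omega⟩ ⟨j + 1, hj⟩ (by simp [Fin.lt_def])
  rw [mem_seg_aux _ _ _ hlti] at ha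
  rw [mem_seg_aux _ _ _ hltj] at hb
  obtain ⟨a1, a2, a3⟩ := ha
  obtain ⟨b1, b2, b3⟩ := hb
  rcases hij.eq_or_lt with rfl | hlt
  · rw [hab, ← b3] at a3
    have := mul_right_cancel₀ (sub_pos.2 hlti).ne' a3
    linarith
  · obtain rfl : j = i + 1 := by
      by_contra hne
      have := hmono ⟨i + 1, hi⟩ ⟨j, by omega⟩ (by simp only [Fin.lt_def]; omega)
      linarith
    have e1 : a.1 = (v ⟨i + 1, hi⟩).1 := by linarith
    have e2 : b.1 = (v ⟨i + 1, hi⟩).1 := by linarith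
    rw [e1] at a3
    rw [e2, sub_self, mul_zero] at b3
    have c1 := mul_right_cancel₀ (sub_pos.2 hlti).ne' a3
    have c2 := (mul_eq_zero.1 b3).resolve_right (sub_pos.2 hltj).ne'
    linarith

theorem stmt_15 (n : ℕ) (hn : 2 ≤ n) (v : Fin n → ℝ × ℝ)
    (hmono : ∀ i j : Fin n, i < j → (v i).1 < (v j).1)
    (h : ℝ) (h0 : (v ⟨0, by omega⟩).2 = h) (hlast : (v ⟨n - 1, by omega⟩).2 = h)
    (hbelow : ∀ i : Fin n, (v i).2 ≤ h)
    (G : Set (ℝ × ℝ)) (hGH : G ⊆ topEdge n hn v) :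
    uniPoly n hn v h ⊆ (⋃ g ∈ G, visIn (uniPoly n hn v h) g) ↔
      lowerChain n hn v ⊆ ⋃ g ∈ G, visIn (uniPoly n hn v h) g := by
  constructor
  · intro H
    refine Subset.trans ?_ H
    intro t ht
    have hm : ∀ i j : Fin n, i ≤ j → (v i).1 ≤ (v j).1 := by
      intro i j hij
      rcases hij.eq_or_lt with rfl | hlt
      · exact le_rfl
      · exact (hmono i j hlt).le
    have ht' := ht
    rw [mem_lowerChain_aux] at ht'
    obtain ⟨i, hi, hs⟩ := ht'
    have hlt := hmono ⟨i, by omega⟩ ⟨i + 1, hi⟩ (by simp [Fin.lt_def])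
    obtain ⟨c1, c2, -⟩ := (mem_seg_aux _ _ _ hlt).1 hs
    have d1 := hm ⟨0, by omega⟩ ⟨i, by omega⟩ (by simp [Fin.le_def])
    have d2 := hm ⟨i + 1, hi⟩ ⟨n - 1, by omega⟩ (by simp only [Fin.le_def]; omega)
    refine ⟨by linarith, by linarith, ?_, fun u hu hut =>
      (lowerChain_unique_aux n hn v hmono u t hu ht hut).le⟩
    have e1 := hbelow ⟨i, by omega⟩
    have e2 := hbelow ⟨i + 1, hi⟩
    obtain ⟨s, r, hs, hr, hsr, rfl⟩ := hs
    simp only [Prod.snd_add, Prod.smul_snd, smul_eq_mul]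
    obtain rfl : s = 1 - r := by linarith
    nlinarith
  · intro H p hp
    have hp' := hp
    obtain ⟨p1, p2, p3, p4⟩ := hp'
    obtain ⟨q, hq, hqp⟩ := exists_lowerChain_aux n hn v hmono p.1 p1 p2
    have hle := p4 q hq hqp
    have hv := H hq
    simp only [mem_iUnion] at hv ⊢
    obtain ⟨g, hg, hqP, hsee⟩ := hv
    refine ⟨g, hg, hp, ?_⟩
    have hg2 : g.2 = h := by
      obtain ⟨s, r, hs, hr, hsr, rfl⟩ := hGH hg
      simp only [Prod.snd_add, Prod.smul_snd, smul_eq_mul, h0, hlast]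
      rw [← add_mul, hsr, one_mul]
    rintro _ ⟨s, r, hs, hr, hsr, rfl⟩
    obtain ⟨w1, w2, w3, w4⟩ := hsee ⟨s, r, hs, hr, hsr, rfl⟩
    simp only [Prod.fst_add, Prod.smul_fst, Prod.snd_add, Prod.smul_snd, smul_eq_mul, hqp]
      at w1 w2 w3 w4
    have hmul := mul_le_mul_of_nonneg_left hle hr
    refine ⟨by simpa using w1, by simpa using w2, ?_, fun t ht htx => ?_⟩
    · simp only [Prod.snd_add, Prod.smul_snd, smul_eq_mul, hg2]
      obtain rfl : s = 1 - r := by linarith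
      nlinarith
    · have := w4 t ht (by simpa using htx)
      simp only [Prod.snd_add, Prod.smul_snd, smul_eq_mul]
      linarith
end
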